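/- arXiv:2004.14521 — 6 statements merged into one kernel-verified Lean document; each statement's English description precedes it below -/
import Mathlib

section
/- Let (Ω, A, P) be a probability space, d ≥ 1, and let g_n : Ω × ℝ^d → ℝ and h_n : Ω × ℝ^d → ℝ ∪ {∞} be sequences of random criterion functions and C_n a sequence of random symmetric positive definite d×d matrices such that, P-almost surely, g_n(ω,·) is continuously differentiable and h_n(ω,·) is convex and proper. Let θ̂_n be random vectors such that P-almost surely θ̂_n minimizes g_n + h_n over ℝ^d. Assume: (i) for each M > 0 there is a (deterministic) symmetric positive definite matrix H such that sup over θ with √n‖θ − θ̂_n‖ < M of ‖√n(∇g_n(θ) − ∇g_n(θ̂_n)) − √n H (θ − θ̂_n)‖ converges to 0 in probability; (ii) C_n⁻¹ H → I in probability, where I is the d×d identity. Then for any √n-consistent estimator θ̂_init,n of θ̂_n, and any random vectors θ̂_ose,n satisfying P-almost surely θ̂_ose,n ∈ prox_{h_n}^{C_n}(θ̂_init,n − C_n⁻¹ ∇g_n(θ̂_init,n)), the estimators θ̂_ose,n and θ̂_n are asymptotically equivalent, i.e. √n(θ̂_ose,n − θ̂_n) → 0 in probability. -/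
open MeasureTheory Filter Topology ProbabilityTheory

noncomputable section

/-- Apply a `d × d` real matrix to a vector of `EuclideanSpace ℝ (Fin d)`. -/
def mApp {d : ℕ} (C : Matrix (Fin d) (Fin d) ℝ) (v : EuclideanSpace ℝ (Fin d)) :
    EuclideanSpace ℝ (Fin d) :=
  Matrix.toEuclideanLin C v

/-- The squared `C`-norm `‖v‖_C² = vᵀ C v`. -/
def cnormSq {d : ℕ} (C : Matrix (Fin d) (Fin d) ℝ) (v : EuclideanSpace ℝ (Fin d)) : ℝ :=
  inner ℝ v (mApp C v)

/-- The scaled proximal operator (as a set of minimizers):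
`prox_f^C(x) = argmin_w { f(w) + (1/2)‖w − x‖_C² }`. -/
def proxSet {d : ℕ} (f : EuclideanSpace ℝ (Fin d) → EReal) (C : Matrix (Fin d) (Fin d) ℝ)
    (x : EuclideanSpace ℝ (Fin d)) : Set (EuclideanSpace ℝ (Fin d)) :=
  {w | ∀ u, f w + ((cnormSq C (w - x) / 2 : ℝ) : EReal) ≤ f u + ((cnormSq C (u - x) / 2 : ℝ) : EReal)}

/-- A proper extended-real-valued function: not identically `+∞`, never `−∞`. -/
def ProperFn {d : ℕ} (f : EuclideanSpace ℝ (Fin d) → EReal) : Prop :=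
  (∃ x, f x ≠ ⊤) ∧ ∀ x, f x ≠ ⊥

/-- Convexity for extended-real-valued functions. -/
def ConvexFnE {d : ℕ} (f : EuclideanSpace ℝ (Fin d) → EReal) : Prop :=
  ∀ x y : EuclideanSpace ℝ (Fin d), ∀ a b : ℝ, 0 ≤ a → 0 ≤ b → a + b = 1 →
    f (a • x + b • y) ≤ (a : EReal) * f x + (b : EReal) * f y

/-- Operator norm of a matrix acting on Euclidean space. -/
def matNorm {d : ℕ} (C : Matrix (Fin d) (Fin d) ℝ) : ℝ :=
  ‖(Matrix.toEuclideanCLM (𝕜 := ℝ) C : EuclideanSpace ℝ (Fin d) →L[ℝ] EuclideanSpace ℝ (Fin d))‖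

/-- Convergence to zero in probability of a sequence of random vectors. -/
def TendstoInProb {Ω : Type*} [MeasurableSpace Ω] (P : Measure Ω) {E : Type*} [Norm E]
    (Y : ℕ → Ω → E) : Prop :=
  ∀ ε : ℝ, 0 < ε → Tendsto (fun n => P {ω | ε ≤ ‖Y n ω‖}) atTop (𝓝 0)

/-- Boundedness in probability (`O_P(1)`). -/
def BoundedInProb {Ω : Type*} [MeasurableSpace Ω] (P : Measure Ω) {E : Type*} [Norm E]
    (Y : ℕ → Ω → E) : Prop :=
  ∀ ε : ℝ, 0 < ε → ∃ M : ℝ, ∃ N : ℕ, ∀ n ≥ N, P {ω | M < ‖Y n ω‖} ≤ ENNReal.ofReal ε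

/-- `Y_n = O_P(r_n)`. -/
def BigOP {Ω : Type*} [MeasurableSpace Ω] (P : Measure Ω) {E : Type*} [Norm E]
    (Y : ℕ → Ω → E) (r : ℕ → ℝ) : Prop :=
  ∀ ε : ℝ, 0 < ε → ∃ M : ℝ, ∃ N : ℕ, ∀ n ≥ N, P {ω | M * r n < ‖Y n ω‖} ≤ ENNReal.ofReal ε

/-- A sequence of events holds with high probability (probability tending to one). -/
def WithHighProb {Ω : Type*} [MeasurableSpace Ω] (P : Measure Ω) (A : ℕ → Set Ω) : Prop :=
  Tendsto (fun n => P (A n)) atTop (𝓝 1)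

end

theorem mApp_add' {d : ℕ} (C : Matrix (Fin d) (Fin d) ℝ) (u v : EuclideanSpace ℝ (Fin d)) :
    mApp C (u + v) = mApp C u + mApp C v := map_add _ _ _

theorem mApp_sub' {d : ℕ} (C : Matrix (Fin d) (Fin d) ℝ) (u v : EuclideanSpace ℝ (Fin d)) :
    mApp C (u - v) = mApp C u - mApp C v := map_sub _ _ _

theorem mApp_smul' {d : ℕ} (C : Matrix (Fin d) (Fin d) ℝ) (t : ℝ) (v : EuclideanSpace ℝ (Fin d)) :
    mApp C (t • v) = t • mApp C v := map_smul _ _ _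

theorem mApp_eq_clm {d : ℕ} (C : Matrix (Fin d) (Fin d) ℝ) (v : EuclideanSpace ℝ (Fin d)) :
    mApp C v = Matrix.toEuclideanCLM (𝕜 := ℝ) C v := rfl

theorem mApp_norm_le {d : ℕ} (C : Matrix (Fin d) (Fin d) ℝ) (v : EuclideanSpace ℝ (Fin d)) :
    ‖mApp C v‖ ≤ matNorm C * ‖v‖ := by
  rw [mApp_eq_clm]
  exact ContinuousLinearMap.le_opNorm _ _

theorem mApp_inner_eq {d : ℕ} (C : Matrix (Fin d) (Fin d) ℝ) (u v : EuclideanSpace ℝ (Fin d)) :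
    inner ℝ u (mApp C v) = u.ofLp ⬝ᵥ (C.mulVec v.ofLp) := by
  simp [mApp, EuclideanSpace.inner_eq_star_dotProduct, dotProduct_comm]

theorem mApp_symm {d : ℕ} {C : Matrix (Fin d) (Fin d) ℝ} (hC : C.PosDef)
    (u v : EuclideanSpace ℝ (Fin d)) :
    inner ℝ u (mApp C v) = inner ℝ v (mApp C u) := by
  have h : C.transpose = C := by simpa using hC.isHermitian.eq
  rw [mApp_inner_eq, mApp_inner_eq, Matrix.dotProduct_mulVec, ← Matrix.mulVec_transpose, h,
    dotProduct_comm]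

theorem mApp_pos {d : ℕ} {C : Matrix (Fin d) (Fin d) ℝ} (hC : C.PosDef)
    (u : EuclideanSpace ℝ (Fin d)) (hu : u ≠ 0) : 0 < inner ℝ u (mApp C u) := by
  rw [mApp_inner_eq]
  have := hC.dotProduct_mulVec_pos (x := u.ofLp) (by simpa using hu)
  simpa using this

theorem posDef_coercive {d : ℕ} {C : Matrix (Fin d) (Fin d) ℝ} (hC : C.PosDef) :
    ∃ l : ℝ, 0 < l ∧ ∀ u : EuclideanSpace ℝ (Fin d), l * ‖u‖ ^ 2 ≤ inner ℝ u (mApp C u) := by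
  have hcont : Continuous fun u : EuclideanSpace ℝ (Fin d) => (inner ℝ u (mApp C u) : ℝ) := by
    simp only [mApp_eq_clm]
    fun_prop
  have hcomp : IsCompact (Metric.sphere (0 : EuclideanSpace ℝ (Fin d)) 1) := isCompact_sphere _ _
  rcases (Metric.sphere (0 : EuclideanSpace ℝ (Fin d)) 1).eq_empty_or_nonempty with he | hne
  · refine ⟨1, one_pos, fun u => ?_⟩
    by_cases hu : u = 0
    · simp [hu]
    · exfalso
      have : (‖u‖⁻¹ • u) ∈ Metric.sphere (0 : EuclideanSpace ℝ (Fin d)) 1 := by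
        simp [norm_smul, hu]
      simp [he] at this
  · obtain ⟨z, hz, hzmin⟩ := hcomp.exists_isMinOn hne hcont.continuousOn
    have hz0 : z ≠ 0 := by
      rintro rfl
      simp at hz
    refine ⟨_, mApp_pos hC z hz0, fun u => ?_⟩
    by_cases hu : u = 0
    · simp [hu]
    · have hmem : (‖u‖⁻¹ • u) ∈ Metric.sphere (0 : EuclideanSpace ℝ (Fin d)) 1 := by
        simp [norm_smul, hu]
      have h1 := hzmin hmem
      simp only [Set.mem_setOf_eq, mApp_smul', inner_smul_left, inner_smul_right] at h1
      have hn : 0 < ‖u‖ := norm_pos_iff.mpr hu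
      have h2 := mul_le_mul_of_nonneg_right h1 (sq_nonneg ‖u‖)
      refine h2.trans (le_of_eq ?_)
      simp only [conj_trivial]
      field_simp

/-- first-order variational inequality -/
theorem variational {d : ℕ} {f : EuclideanSpace ℝ (Fin d) → ℝ}
    {h : EuclideanSpace ℝ (Fin d) → EReal} (hconv : ConvexFnE h) (hprop : ProperFn h)
    {w : EuclideanSpace ℝ (Fin d)} (hmin : ∀ u, (f w : EReal) + h w ≤ (f u : EReal) + h u)
    {y : EuclideanSpace ℝ (Fin d)} (hw : h w ≠ ⊤) (hy : h y ≠ ⊤) {D : ℝ}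
    (hD : HasDerivAt (fun t : ℝ => f (w + t • (y - w))) D 0) :
    (h w).toReal ≤ (h y).toReal + D := by
  have hsl := hD.tendsto_slope_zero_right
  have key : ∀ᶠ t : ℝ in 𝓝[>] 0, (h w).toReal - (h y).toReal ≤
      t⁻¹ • ((fun t : ℝ => f (w + t • (y - w))) (0 + t) - (fun t : ℝ => f (w + t • (y - w))) 0) := by
    filter_upwards [Ioo_mem_nhdsGT (show (0 : ℝ) < 1 by norm_num)] with t ht
    obtain ⟨ht0, ht1⟩ := ht
    have hc := hconv w y (1 - t) t (by linarith) ht0.le (by ring)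
    have he : (1 - t) • w + t • y = w + t • (y - w) := by
      rw [smul_sub, sub_smul, one_smul]; abel
    rw [he] at hc
    have hm := (hmin (w + t • (y - w))).trans (add_le_add_right hc _)
    rw [← EReal.coe_toReal hw (hprop.2 w), ← EReal.coe_toReal hy (hprop.2 y)] at hm
    norm_cast at hm
    simp only [zero_add, zero_smul, add_zero, smul_eq_mul]
    rw [inv_mul_eq_div, le_div_iff₀ ht0]
    nlinarith
  have := ge_of_tendsto hsl key
  linarith

theorem ne_top_of_min {d : ℕ} {f : EuclideanSpace ℝ (Fin d) → ℝ}
    {h : EuclideanSpace ℝ (Fin d) → EReal} (hprop : ProperFn h)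
    {w : EuclideanSpace ℝ (Fin d)} (hmin : ∀ u, (f w : EReal) + h w ≤ (f u : EReal) + h u) :
    h w ≠ ⊤ := by
  intro hw
  obtain ⟨x, hx⟩ := hprop.1
  have := hmin x
  rw [hw, EReal.coe_add_top, top_le_iff, ← EReal.coe_toReal hx (hprop.2 x), ← EReal.coe_add] at this
  exact EReal.coe_ne_top _ this

theorem hasDerivAt_of_grad {d : ℕ} {f : EuclideanSpace ℝ (Fin d) → ℝ}
    {v w z : EuclideanSpace ℝ (Fin d)} (hf : HasGradientAt f v w) :
    HasDerivAt (fun t : ℝ => f (w + t • z)) (inner ℝ v z) 0 := by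
  have h1 : HasDerivAt (fun t : ℝ => w + t • z) z 0 := by
    simpa using ((hasDerivAt_id (0 : ℝ)).smul_const z).const_add w
  have h2 : HasFDerivAt f (InnerProductSpace.toDual ℝ _ v) (w + (0 : ℝ) • z) := by
    simpa using hf.hasFDerivAt
  have h3 := h2.comp_hasDerivAt (0 : ℝ) h1
  rw [InnerProductSpace.toDual_apply_apply] at h3
  exact h3

theorem hasDerivAt_quad {d : ℕ} {C : Matrix (Fin d) (Fin d) ℝ} (hC : C.PosDef)
    (x w z : EuclideanSpace ℝ (Fin d)) :
    HasDerivAt (fun t : ℝ => cnormSq C ((w + t • z) - x) / 2) (inner ℝ (mApp C (w - x)) z) 0 := by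
  have he : (fun t : ℝ => cnormSq C ((w + t • z) - x) / 2) = fun t : ℝ =>
      cnormSq C (w - x) / 2 + t * inner ℝ (mApp C (w - x)) z + t ^ 2 * (cnormSq C z / 2) := by
    funext t
    have : (w + t • z) - x = (w - x) + t • z := by abel
    rw [this]
    simp only [cnormSq, mApp_add', mApp_smul', inner_add_left, inner_add_right, inner_smul_left,
      inner_smul_right, conj_trivial]
    rw [mApp_symm hC (w - x) z, real_inner_comm z (mApp C (w - x))]
    ring
  rw [he]
  have := (((hasDerivAt_id (0 : ℝ)).mul_const (inner ℝ (mApp C (w - x)) z)).const_add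
    (cnormSq C (w - x) / 2)).add (((hasDerivAt_id (0 : ℝ)).pow 2).mul_const (cnormSq C z / 2))
  refine HasDerivAt.congr_deriv this ?_
  simp

theorem mApp_mul_inv {d : ℕ} {C : Matrix (Fin d) (Fin d) ℝ} (hC : C.PosDef)
    (v : EuclideanSpace ℝ (Fin d)) : mApp C (mApp C⁻¹ v) = v := by
  have hdet : IsUnit C.det := (Matrix.isUnit_iff_isUnit_det _).mp hC.isUnit
  rw [mApp_eq_clm, mApp_eq_clm, ← ContinuousLinearMap.mul_apply, ← map_mul,
    Matrix.mul_nonsing_inv _ hdet, map_one]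
  rfl

theorem matNorm_sub_le {d : ℕ} {C H : Matrix (Fin d) (Fin d) ℝ} (hC : C.PosDef) {η : ℝ}
    (h2 : η ≤ 1 / 2) (hη : matNorm (C⁻¹ * H - 1) ≤ η) :
    matNorm (H - C) ≤ 2 * matNorm H * η := by
  have hdet : IsUnit C.det := (Matrix.isUnit_iff_isUnit_det _).mp hC.isUnit
  have e : H - C = C * (C⁻¹ * H - 1) := by
    rw [mul_sub, ← mul_assoc, Matrix.mul_nonsing_inv _ hdet, one_mul, mul_one]
  have hC0 : 0 ≤ matNorm C := norm_nonneg _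
  have hE0 : 0 ≤ matNorm (C⁻¹ * H - 1) := norm_nonneg _
  have h1 : matNorm (H - C) ≤ matNorm C * matNorm (C⁻¹ * H - 1) := by
    rw [e]; unfold matNorm; rw [map_mul]; exact norm_mul_le _ _
  have h3 : matNorm C ≤ matNorm H + matNorm (H - C) := by
    unfold matNorm
    rw [map_sub]
    have := norm_sub_norm_le (Matrix.toEuclideanCLM (𝕜 := ℝ) C) (Matrix.toEuclideanCLM (𝕜 := ℝ) H)
    rw [norm_sub_rev] at this
    linarith
  have h4 : matNorm C ≤ 2 * matNorm H := by nlinarith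
  nlinarith

theorem det_bound {d : ℕ} {g : EuclideanSpace ℝ (Fin d) → ℝ}
    {dg : EuclideanSpace ℝ (Fin d) → EuclideanSpace ℝ (Fin d)}
    {h : EuclideanSpace ℝ (Fin d) → EReal} {C H : Matrix (Fin d) (Fin d) ℝ}
    {p i o : EuclideanSpace ℝ (Fin d)}
    (hg : ∀ θ, HasGradientAt g (dg θ) θ) (hconv : ConvexFnE h) (hprop : ProperFn h)
    (hC : C.PosDef) (hmin : ∀ θ, (g p : EReal) + h p ≤ (g θ : EReal) + h θ)
    (hose : o ∈ proxSet h C (i - mApp C⁻¹ (dg i)))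
    {l : ℝ} (hl : 0 < l) (hco : ∀ u : EuclideanSpace ℝ (Fin d), l * ‖u‖ ^ 2 ≤ inner ℝ u (mApp H u))
    (hD : matNorm (H - C) ≤ l / 2) :
    l / 2 * ‖o - p‖ ≤ matNorm (H - C) * ‖i - p‖ + ‖dg i - dg p - mApp H (i - p)‖ := by
  set x := i - mApp C⁻¹ (dg i) with hx
  have hmin2 : ∀ u, ((cnormSq C (o - x) / 2 : ℝ) : EReal) + h o
      ≤ ((cnormSq C (u - x) / 2 : ℝ) : EReal) + h u := by
    intro u
    have := hose u
    rwa [add_comm, add_comm (h u)] at this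
  have hp := ne_top_of_min hprop hmin
  have ho := ne_top_of_min (f := fun u => cnormSq C (u - x) / 2) hprop hmin2
  have v1 := variational hconv hprop hmin hp ho (hasDerivAt_of_grad (hg p))
  have v2 := variational (f := fun u => cnormSq C (u - x) / 2) hconv hprop hmin2 ho hp
    (hasDerivAt_quad hC x o (p - o))
  have e1 : mApp C (o - x) = mApp C (o - p) - mApp C (i - p) + dg i := by
    have : o - x = (o - p) - (i - p) + mApp C⁻¹ (dg i) := by rw [hx]; abel
    rw [this, mApp_add', mApp_sub', mApp_mul_inv hC]
  rw [e1] at v2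
  set u := o - p with hu
  set w := i - p with hw
  have e2 : p - o = -u := by rw [hu]; abel
  rw [e2] at v2
  set r := dg i - dg p - mApp H w with hr
  have e3 : dg i = dg p + mApp H w + r := by rw [hr]; abel
  rw [e3] at v2
  have eD : ∀ v, mApp (H - C) v = mApp H v - mApp C v := by
    intro v; simp [mApp]
  have main : inner ℝ u (mApp H u) ≤ inner ℝ (mApp (H - C) u - mApp (H - C) w - r) u := by
    rw [eD, eD, real_inner_comm]
    simp only [inner_add_left, inner_sub_left, inner_neg_right] at v1 v2 ⊢
    linarith
  have c1 := real_inner_le_norm (mApp (H - C) u - mApp (H - C) w - r) u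
  have c2 : ‖mApp (H - C) u - mApp (H - C) w - r‖ ≤
      matNorm (H - C) * ‖u‖ + matNorm (H - C) * ‖w‖ + ‖r‖ := by
    refine (norm_sub_le _ _).trans (add_le_add ((norm_sub_le _ _).trans
      (add_le_add (mApp_norm_le _ _) (mApp_norm_le _ _))) le_rfl)
  have c3 := hco u
  rcases (norm_nonneg u).eq_or_lt with h0 | h0
  · rw [← h0]
    have : 0 ≤ matNorm (H - C) := norm_nonneg _
    simp only [mul_zero]
    positivity
  · have c4 : (l * ‖u‖) * ‖u‖ ≤ (matNorm (H - C) * ‖u‖ + matNorm (H - C) * ‖w‖ + ‖r‖) * ‖u‖ := by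
      calc _ = l * ‖u‖ ^ 2 := by ring
        _ ≤ _ := c3.trans (main.trans (c1.trans (mul_le_mul_of_nonneg_right c2 h0.le)))
    have c5 := le_of_mul_le_mul_right c4 h0
    nlinarith

open MeasureTheory Filter Topology in
/-- Theorem 2.1 (one-step estimation for scaled proximal gradient descent on a composite model):
under assumptions (i) and (ii), the one-step estimator obtained from a single scaled proximal
gradient step started at any `√n`-consistent initial estimator is asymptotically equivalent to
the minimizer of the composite model. -/
theorem one_step_scaled_proximal_gradient
    (d : ℕ) (hd : 1 ≤ d)
    {Ω : Type*} [MeasurableSpace Ω] (P : MeasureTheory.Measure Ω) [IsProbabilityMeasure P]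
    (g : ℕ → Ω → EuclideanSpace ℝ (Fin d) → ℝ)
    (dg : ℕ → Ω → EuclideanSpace ℝ (Fin d) → EuclideanSpace ℝ (Fin d))
    (h : ℕ → Ω → EuclideanSpace ℝ (Fin d) → EReal)
    (C : ℕ → Ω → Matrix (Fin d) (Fin d) ℝ)
    (θhat θinit θose : ℕ → Ω → EuclideanSpace ℝ (Fin d))
    -- P-a.s., gₙ is continuously differentiable with gradient dgₙ
    (hg : ∀ n, ∀ᵐ ω ∂P, (∀ θ, HasGradientAt (g n ω) (dg n ω θ) θ) ∧ Continuous (dg n ω))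
    -- P-a.s., hₙ is convex and proper
    (hh : ∀ n, ∀ᵐ ω ∂P, ConvexFnE (h n ω) ∧ ProperFn (h n ω))
    -- the scaling matrices are symmetric positive definite
    (hC : ∀ n, ∀ᵐ ω ∂P, (C n ω).PosDef)
    -- P-a.s., θ̂ₙ minimizes gₙ + hₙ over ℝ^d
    (hmin : ∀ n, ∀ᵐ ω ∂P, ∀ θ,
      ((g n ω (θhat n ω) : EReal) + h n ω (θhat n ω)) ≤ (g n ω θ : EReal) + h n ω θ)
    -- assumption (i): uniform stochastic differentiability with positive definite H
    (H : Matrix (Fin d) (Fin d) ℝ) (hH : H.PosDef)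
    (hi : ∀ M : ℝ, 0 < M → ∀ ε : ℝ, 0 < ε →
      Tendsto (fun n : ℕ => P {ω | ∃ θ, Real.sqrt n * ‖θ - θhat n ω‖ < M ∧
        ε ≤ Real.sqrt n * ‖(dg n ω θ - dg n ω (θhat n ω)) - mApp H (θ - θhat n ω)‖})
        atTop (𝓝 0))
    -- assumption (ii): Cₙ⁻¹ H → I in probability
    (hii : ∀ ε : ℝ, 0 < ε →
      Tendsto (fun n => P {ω | ε ≤ matNorm ((C n ω)⁻¹ * H - 1)}) atTop (𝓝 0))
    -- θ̂_init is a √n-consistent estimator of θ̂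
    (hinit : BoundedInProb P (fun n ω => Real.sqrt n • (θinit n ω - θhat n ω)))
    -- the one-step estimator: a single scaled proximal gradient step from θ̂_init
    (hose : ∀ n, ∀ᵐ ω ∂P,
      θose n ω ∈ proxSet (h n ω) (C n ω)
        (θinit n ω - mApp (C n ω)⁻¹ (dg n ω (θinit n ω)))) :
    -- conclusion: asymptotic equivalence of θ̂_ose and θ̂
    TendstoInProb P (fun n ω => Real.sqrt n • (θose n ω - θhat n ω)) := by
  obtain ⟨l, hl, hco⟩ := posDef_coercive hH
  intro ε hε
  rw [ENNReal.tendsto_nhds_zero]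
  intro δ hδ
  by_cases hδt : δ = ⊤
  · simp [hδt]
  have hδr : 0 < δ.toReal := ENNReal.toReal_pos hδ.ne' hδt
  obtain ⟨M, N, hMN⟩ := hinit (δ.toReal / 3) (by positivity)
  set M' : ℝ := max M 0 + 1 with hM'
  have hM'0 : 0 < M' := by positivity
  have hMM : M < M' := lt_of_le_of_lt (le_max_left M 0) (by linarith)
  have hH0 : 0 ≤ matNorm H := norm_nonneg _
  set K : ℝ := 2 * matNorm H + 1 with hK
  have hK0 : 0 < K := by positivity
  set η : ℝ := min (1 / 2) (min (l / 2 / K) (l * ε / 8 / (K * M'))) with hη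
  have hη0 : 0 < η := by positivity
  have hη1 : η ≤ 1 / 2 := min_le_left _ _
  have hη2 : K * η ≤ l / 2 := by
    have : η ≤ l / 2 / K := (min_le_right _ _).trans (min_le_left _ _)
    rwa [le_div_iff₀ hK0, mul_comm] at this
  have hη3 : K * η * M' ≤ l * ε / 8 := by
    have : η ≤ l * ε / 8 / (K * M') := (min_le_right _ _).trans (min_le_right _ _)
    rw [le_div_iff₀ (by positivity)] at this
    linarith
  have hδ3 : (0 : ENNReal) < ENNReal.ofReal (δ.toReal / 3) := by
    rw [ENNReal.ofReal_pos]; positivity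
  have a1 := ENNReal.tendsto_nhds_zero.mp (hi M' hM'0 (l * ε / 8) (by positivity)) _ hδ3
  have a2 := ENNReal.tendsto_nhds_zero.mp (hii η hη0) _ hδ3
  filter_upwards [a1, a2, eventually_ge_atTop N] with n b1 b2 hn
  have b3 := hMN n hn
  have hsub : P {ω | ε ≤ ‖Real.sqrt n • (θose n ω - θhat n ω)‖} ≤
      P (({ω | M < ‖Real.sqrt n • (θinit n ω - θhat n ω)‖} ∪
        {ω | η ≤ matNorm ((C n ω)⁻¹ * H - 1)}) ∪
        {ω | ∃ θ, Real.sqrt n * ‖θ - θhat n ω‖ < M' ∧ l * ε / 8 ≤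
          Real.sqrt n * ‖(dg n ω θ - dg n ω (θhat n ω)) - mApp H (θ - θhat n ω)‖}) := by
    apply measure_mono_ae
    filter_upwards [hg n, hh n, hC n, hmin n, hose n] with ω w1 w2 w3 w4 w5
    intro hω
    by_contra hcon
    change ¬ ((_ ∨ _) ∨ _) at hcon
    push Not at hcon
    obtain ⟨⟨k1, k2⟩, k3⟩ := hcon
    change ε ≤ ‖Real.sqrt n • (θose n ω - θhat n ω)‖ at hω
    replace k1 : ¬ (M < ‖Real.sqrt n • (θinit n ω - θhat n ω)‖) := k1
    replace k2 : ¬ (η ≤ matNorm ((C n ω)⁻¹ * H - 1)) := k2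
    replace k3 : ¬ (∃ θ, Real.sqrt n * ‖θ - θhat n ω‖ < M' ∧ l * ε / 8 ≤
          Real.sqrt n * ‖(dg n ω θ - dg n ω (θhat n ω)) - mApp H (θ - θhat n ω)‖) := k3
    push Not at k1 k2 k3
    rw [norm_smul, Real.norm_of_nonneg (Real.sqrt_nonneg _)] at hω k1
    have k4 := k3 (θinit n ω) (k1.trans_lt hMM)
    have m1 := matNorm_sub_le w3 hη1 k2.le
    have m2 : matNorm (H - C n ω) ≤ K * η := by nlinarith
    have m3 := det_bound w1.1 w2.1 w2.2 w3 w4 w5 hl hco (m2.trans hη2)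
    have m4 := mul_le_mul_of_nonneg_left m3 (Real.sqrt_nonneg (n : ℝ))
    have m5 : matNorm (H - C n ω) * (Real.sqrt n * ‖θinit n ω - θhat n ω‖) ≤ l * ε / 8 :=
      (mul_le_mul m2 (k1.trans hMM.le) (by positivity) (by positivity)).trans hη3
    have m6 : l / 2 * ε ≤ l / 2 * (Real.sqrt n * ‖θose n ω - θhat n ω‖) :=
      mul_le_mul_of_nonneg_left hω (by positivity)
    have : 0 < l * ε := by positivity
    nlinarith
  calc _ ≤ _ := hsub
    _ ≤ ENNReal.ofReal (δ.toReal / 3) + ENNReal.ofReal (δ.toReal / 3) +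
        ENNReal.ofReal (δ.toReal / 3) :=
      (measure_union_le _ _).trans (add_le_add ((measure_union_le _ _).trans
        (add_le_add b3 b2)) b1)
    _ = δ := by
      rw [← ENNReal.ofReal_add (by positivity) (by positivity),
        ← ENNReal.ofReal_add (by positivity) (by positivity)]
      rw [show δ.toReal / 3 + δ.toReal / 3 + δ.toReal / 3 = δ.toReal by ring,
        ENNReal.ofReal_toReal hδt]
end

section
/- Let {p_θ : θ ∈ Θ}, Θ ⊆ ℝ^d open, be a family of probability densities with respect to a σ-finite measure μ, let θ* ∈ Θ, and let X_1, ..., X_n be iid with density p_{θ*}. Let g_n(θ) = −(1/n) Σ_{i=1}^n log p_θ(X_i), let h_n be random convex proper functions, let C_n be random positive definite matrices, and let θ̂_n minimize g_n + h_n almost surely. Assume θ̂_n is √n-consistent for some fixed θ₀ ∈ Θ, and: (i) θ ↦ log p_θ(x) is three times differentiable for every x; (ii) E[∇²log p_{θ₀}(X_1)] exists and is negative definite; (iii) the third-order partial derivatives of log p_θ(x) are dominated by a fixed μ-integrable function for every θ in a neighborhood of θ₀; (iv) −C_n⁻¹ E[∇² log p_{θ₀}(X_1)] → I in probability. Then for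 any √n-consistent estimator θ̂_init,n of θ̂_n, the one-step estimator θ̂_ose,n ∈ prox_{h_n}^{C_n}(θ̂_init,n − C_n⁻¹ ∇g_n(θ̂_init,n)) is asymptotically equivalent to θ̂_n, i.e. √n(θ̂_ose,n − θ̂_n) → 0 in probability. -/
open MeasureTheory Filter Topology ProbabilityTheory

/-- View a plain vector as an element of Euclidean space. -/
def toEuc {d : ℕ} (v : Fin d → ℝ) : EuclideanSpace ℝ (Fin d) := WithLp.toLp 2 v

section helpers

noncomputable abbrev osM {d : ℕ} (A : Matrix (Fin d) (Fin d) ℝ) :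
    EuclideanSpace ℝ (Fin d) →L[ℝ] EuclideanSpace ℝ (Fin d) :=
  Matrix.toEuclideanCLM (𝕜 := ℝ) A

lemma os_mApp {d : ℕ} (A : Matrix (Fin d) (Fin d) ℝ) (v : EuclideanSpace ℝ (Fin d)) :
    mApp A v = osM A v := rfl

lemma os_apply {d : ℕ} (A : Matrix (Fin d) (Fin d) ℝ) (v : EuclideanSpace ℝ (Fin d)) (i : Fin d) :
    osM A v i = ∑ j, A i j * v j := rfl

lemma os_neg {d : ℕ} (A : Matrix (Fin d) (Fin d) ℝ) : osM (-A) = -osM A :=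
  map_neg (Matrix.toEuclideanCLM (𝕜 := ℝ) (n := Fin d)) A

lemma os_smul_sum {d : ℕ} (c : ℝ) (s : Finset ℕ) (A : ℕ → Matrix (Fin d) (Fin d) ℝ) :
    osM (c • ∑ i ∈ s, A i) = c • ∑ i ∈ s, osM (A i) := by
  have h1 := map_smul (Matrix.toEuclideanCLM (𝕜 := ℝ) (n := Fin d)) c (∑ i ∈ s, A i)
  have h2 := map_sum (Matrix.toEuclideanCLM (𝕜 := ℝ) (n := Fin d)) A s
  rw [h2] at h1
  exact h1

lemma os_subgrad {d : ℕ} (f : EuclideanSpace ℝ (Fin d) → EReal) (hf : ConvexFnE f)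
    (φ : EuclideanSpace ℝ (Fin d) → ℝ)
    (a u : EuclideanSpace ℝ (Fin d)) (G' α β : ℝ)
    (hφ : HasDerivAt (fun t : ℝ => φ (a + t • (u - a))) G' 0)
    (hα : f a = α) (hβ : f u = β)
    (hmin : ∀ z, f a + (φ a : EReal) ≤ f z + (φ z : EReal)) :
    α - β ≤ G' := by
  have key : ∀ t : ℝ, 0 < t → t ≤ 1 → α - β ≤ t⁻¹ * (φ (a + t • (u - a)) - φ a) := by
    intro t ht ht1
    have h1 := hf a u (1 - t) t (by linarith) ht.le (by ring)
    have hz : (1 - t) • a + t • u = a + t • (u - a) := by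
      rw [sub_smul, smul_sub, one_smul]; abel
    rw [hz, hα, hβ] at h1
    have h2 := hmin (a + t • (u - a))
    rw [hα] at h2
    have h3 : (α : EReal) + (φ a : EReal) ≤
        (((1 - t : ℝ) : EReal) * α + (t : EReal) * β) + (φ (a + t • (u - a)) : EReal) :=
      h2.trans (add_le_add_left h1 _)
    have h4 : α + φ a ≤ ((1 - t) * α + t * β) + φ (a + t • (u - a)) := by
      exact_mod_cast h3
    rw [← div_eq_inv_mul, le_div_iff₀ ht]
    linarith
  have hs := hφ.tendsto_slope_zero_right
  refine ge_of_tendsto hs ?_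
  have : Set.Ioc (0:ℝ) 1 ∈ 𝓝[>] (0:ℝ) := Ioc_mem_nhdsGT one_pos
  filter_upwards [this] with t ht
  have := key t ht.1 ht.2
  simpa [smul_eq_mul] using this

lemma os_symm {d : ℕ} {C : Matrix (Fin d) (Fin d) ℝ} (hC : C.PosDef)
    (v w : EuclideanSpace ℝ (Fin d)) :
    inner ℝ v (osM C w) = inner ℝ (osM C v) w := by
  have h1 : star (osM C) = osM C := by
    have : star C = C := hC.isHermitian
    rw [← map_star, this]
  conv_rhs => rw [← h1]
  rw [ContinuousLinearMap.star_eq_adjoint, ContinuousLinearMap.adjoint_inner_left]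

lemma os_quad_deriv {d : ℕ} {C : Matrix (Fin d) (Fin d) ℝ} (hC : C.PosDef)
    (x a u : EuclideanSpace ℝ (Fin d)) :
    HasDerivAt (fun t : ℝ => cnormSq C (a + t • (u - a) - x) / 2)
      (inner ℝ (osM C (a - x)) (u - a)) 0 := by
  have e : (fun t : ℝ => cnormSq C (a + t • (u - a) - x) / 2) = fun t : ℝ =>
      cnormSq C (a - x) / 2 + t * inner ℝ (osM C (a - x)) (u - a)
        + t ^ 2 * (cnormSq C (u - a) / 2) := by
    funext t
    have : a + t • (u - a) - x = (a - x) + t • (u - a) := by abel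
    rw [this]
    simp only [cnormSq, os_mApp, map_add, map_smul, inner_add_left, inner_add_right,
      inner_smul_left, inner_smul_right, os_symm hC (a - x) (u - a)]
    rw [real_inner_comm (osM C (a - x)) (u - a)]
    simp
    ring
  rw [e]
  have h1 := (((hasDerivAt_id (0:ℝ)).mul_const (inner ℝ (osM C (a - x)) (u - a))).const_add
    (cnormSq C (a - x) / 2)).add (((hasDerivAt_id (0:ℝ)).pow 2).mul_const (cnormSq C (u - a) / 2))
  refine h1.congr_deriv ?_
  simp

lemma os_grad_deriv {d : ℕ} (φ : EuclideanSpace ℝ (Fin d) → ℝ)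
    (a u G : EuclideanSpace ℝ (Fin d)) (h : HasGradientAt φ G a) :
    HasDerivAt (fun t : ℝ => φ (a + t • (u - a))) (inner ℝ G (u - a)) 0 := by
  have h1 : HasDerivAt (fun t : ℝ => a + t • (u - a)) (u - a) 0 := by
    simpa using ((hasDerivAt_id (0:ℝ)).smul_const (u - a)).const_add a
  have h2 : HasFDerivAt φ (InnerProductSpace.toDual ℝ _ G) (a + (0:ℝ) • (u - a)) := by
    simpa using h.hasFDerivAt
  exact h2.comp_hasDerivAt (0:ℝ) h1

lemma os_finite {d : ℕ} {f : EuclideanSpace ℝ (Fin d) → EReal} (hp : ProperFn f)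
    (φ : EuclideanSpace ℝ (Fin d) → ℝ) (a : EuclideanSpace ℝ (Fin d))
    (hmin : ∀ z, f a + (φ a : EReal) ≤ f z + (φ z : EReal)) : ∃ α : ℝ, f a = α := by
  obtain ⟨⟨x, hx⟩, hb⟩ := hp
  have ht : f a ≠ ⊤ := by
    intro ht
    have := hmin x
    rw [ht, EReal.top_add_coe, top_le_iff] at this
    exact (EReal.add_ne_top hx (EReal.coe_ne_top _)) this
  exact ⟨(f a).toReal, (EReal.coe_toReal ht (hb a)).symm⟩

/-- Basic deterministic inequality. -/
lemma os_basic {d : ℕ} {f : EuclideanSpace ℝ (Fin d) → EReal} (hf : ConvexFnE f)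
    (hp : ProperFn f) {C : Matrix (Fin d) (Fin d) ℝ} (hC : C.PosDef)
    (g : EuclideanSpace ℝ (Fin d) → ℝ) (hat init ose G1 G2 : EuclideanSpace ℝ (Fin d))
    (hg : HasGradientAt g G1 hat)
    (hmin : ∀ z, (g hat : EReal) + f hat ≤ (g z : EReal) + f z)
    (hose : ose ∈ proxSet f C (init - mApp C⁻¹ G2)) :
    inner ℝ (osM C (ose - hat)) (ose - hat) ≤
      inner ℝ (osM C (init - hat) - (G2 - G1)) (ose - hat) := by
  have hmin' : ∀ z, f hat + (g hat : EReal) ≤ f z + (g z : EReal) := by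
    intro z; rw [add_comm, add_comm (f z)]; exact hmin z
  obtain ⟨α, hα⟩ := os_finite hp g hat hmin'
  set x := init - mApp C⁻¹ G2 with hx
  have hose' : ∀ z, f ose + ((cnormSq C (ose - x) / 2 : ℝ) : EReal) ≤
    f z + ((cnormSq C (z - x) / 2 : ℝ) : EReal) := hose
  obtain ⟨β, hβ⟩ := os_finite hp (fun z => cnormSq C (z - x) / 2) ose hose'
  have h1 := os_subgrad f hf g hat ose _ α β (os_grad_deriv g hat ose G1 hg) hα hβ hmin'
  have h2 := os_subgrad f hf (fun z => cnormSq C (z - x) / 2) ose hat _ β α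
    (os_quad_deriv hC x ose hat) hβ hα hose'
  have hCC : osM C (mApp C⁻¹ G2) = G2 := by
    rw [os_mApp]
    have : osM C * osM C⁻¹ = 1 := by
      rw [← map_mul, Matrix.mul_nonsing_inv _ ((Matrix.isUnit_iff_isUnit_det _).1 hC.isUnit), map_one]
    exact DFunLike.congr_fun this G2
  have e1 : osM C (ose - x) = osM C (ose - hat) - osM C (init - hat) + G2 := by
    rw [hx]; simp only [map_sub, hCC]; abel
  rw [e1] at h2
  have e2 : hat - ose = -(ose - hat) := by abel
  rw [e2, inner_neg_right, inner_add_left, inner_sub_left] at h2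
  rw [inner_sub_left, inner_sub_left]
  linarith

lemma os_coercive {d : ℕ} (hd : 1 ≤ d) {H : Matrix (Fin d) (Fin d) ℝ} (hH : H.PosDef) :
    ∃ c : ℝ, 0 < c ∧ ∀ v, c * ‖v‖ ^ 2 ≤ inner ℝ (osM H v) v := by
  have : NeZero d := ⟨by omega⟩
  have hpos : ∀ v : EuclideanSpace ℝ (Fin d), v ≠ 0 → 0 < inner ℝ (osM H v) v := by
    intro v hv
    have := hH.dotProduct_mulVec_pos (x := v.ofLp) (by simpa using hv)
    have e : inner ℝ (osM H v) v = star v.ofLp ⬝ᵥ H.mulVec v.ofLp := by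
      rw [EuclideanSpace.inner_eq_star_dotProduct]
      simp
    rw [e]; exact this
  have hne : (Metric.sphere (0 : EuclideanSpace ℝ (Fin d)) 1).Nonempty :=
    NormedSpace.sphere_nonempty.2 zero_le_one
  obtain ⟨v0, hv0, hv0'⟩ := (isCompact_sphere (0 : EuclideanSpace ℝ (Fin d)) 1).exists_isMinOn hne
    (f := fun v => inner ℝ (osM H v) v) (by fun_prop)
  have hv0n : v0 ≠ 0 := by
    rintro rfl; simp at hv0
  refine ⟨_, hpos v0 hv0n, fun v => ?_⟩
  by_cases hv : v = 0
  · simp [hv]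
  have hn : 0 < ‖v‖ := norm_pos_iff.2 hv
  have h1 : (‖v‖⁻¹ • v) ∈ Metric.sphere (0 : EuclideanSpace ℝ (Fin d)) 1 := by
    simp [norm_smul, hn.ne']
  have h2 := hv0' h1
  simp only [Set.mem_ofPred_eq, map_smul, inner_smul_left, inner_smul_right] at h2
  simp only [conj_trivial] at h2
  calc _ ≤ (‖v‖⁻¹ * (‖v‖⁻¹ * inner ℝ (osM H v) v)) * ‖v‖ ^ 2 := by gcongr
    _ = _ := by field_simp

lemma os_C_close {d : ℕ} {C H : Matrix (Fin d) (Fin d) ℝ} (hC : C.PosDef) {e : ℝ}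
    (he : e ≤ 1 / 2) (h : matNorm (C⁻¹ * H - 1) ≤ e) :
    ‖osM C - osM H‖ ≤ 2 * ‖osM H‖ * e := by
  set E := osM (C⁻¹ * H - 1) with hE
  have hEn : ‖E‖ ≤ e := h
  have hu : C * (C⁻¹ * H - 1) = H - C := by
    rw [mul_sub, ← mul_assoc, Matrix.mul_nonsing_inv _ ((Matrix.isUnit_iff_isUnit_det _).1 hC.isUnit)]
    simp
  have h1 : osM C * E = osM H - osM C := by
    rw [hE, ← map_mul, hu, map_sub]
  have h2 : ‖osM H - osM C‖ ≤ ‖osM C‖ * ‖E‖ := h1 ▸ norm_mul_le _ _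
  have h3 : ‖osM C‖ ≤ ‖osM H‖ + ‖osM H - osM C‖ := by
    have := norm_sub_le (osM H) (osM H - osM C)
    simpa using this
  have h0 := norm_nonneg (osM C)
  have h0' := norm_nonneg E
  have h4 : ‖osM C‖ ≤ 2 * ‖osM H‖ := by nlinarith
  rw [norm_sub_rev]
  refine h2.trans ?_
  gcongr

lemma os_matNorm_le {d : ℕ} (A : Matrix (Fin d) (Fin d) ℝ) :
    ‖osM A‖ ≤ ∑ i, ∑ j, |A i j| := by
  refine ContinuousLinearMap.opNorm_le_bound _ (by positivity) fun v => ?_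
  have h1 : ‖osM A v‖ ≤ ∑ i, |osM A v i| := by
    have := norm_sum_le (Finset.univ) fun i => EuclideanSpace.single i (osM A v i)
    have e : ∑ i, EuclideanSpace.single i (osM A v i) = osM A v := by
      ext j
      simp [Finset.sum_apply, Pi.single_apply]
    rw [e] at this
    simpa using this
  refine h1.trans ?_
  rw [Finset.sum_mul]
  refine Finset.sum_le_sum fun i _ => ?_
  rw [os_apply, Finset.sum_mul]
  refine (Finset.abs_sum_le_sum_abs _ _).trans (Finset.sum_le_sum fun j _ => ?_)
  rw [abs_mul]
  gcongr
  exact PiLp.norm_apply_le v j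

lemma os_taylor_gen {E V : Type*} [NormedAddCommGroup E] [NormedSpace ℝ E]
    [NormedAddCommGroup V] [NormedSpace ℝ V] (F : E → V)
    (h2 : ContDiff ℝ 2 F) (θ0 : E) (δ K : ℝ)
    (hK : ∀ θ, ‖θ - θ0‖ < δ → ‖iteratedFDeriv ℝ 2 F θ‖ ≤ K)
    (r : ℝ) (hr0 : 0 < r) (hr : r ≤ δ) (a b : E) (ha : ‖a - θ0‖ < r)
    (hb : ‖b - θ0‖ < r) :
    ‖F a - F b - fderiv ℝ F θ0 (a - b)‖ ≤ K * r * ‖a - b‖ := by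
  have hsm : ContDiff ℝ 1 (fderiv ℝ F) := h2.fderiv_right (by norm_num)
  have hbd : ∀ θ ∈ Metric.ball θ0 r, ‖fderiv ℝ (fderiv ℝ F) θ‖ ≤ K := by
    intro θ hθ
    rw [mem_ball_iff_norm] at hθ
    rw [← norm_iteratedFDeriv_one, norm_iteratedFDeriv_fderiv]
    exact hK θ (hθ.trans_le hr)
  have hK0 : 0 ≤ K := (norm_nonneg _).trans (hK θ0 (by simpa using hr0.trans_le hr))
  have hL : ∀ θ ∈ Metric.ball θ0 r,
      ‖fderiv ℝ F θ - fderiv ℝ F θ0‖ ≤ K * r := by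
    intro θ hθ
    have h1 := (convex_ball θ0 r).norm_image_sub_le_of_norm_fderiv_le (𝕜 := ℝ)
      (f := fderiv ℝ F)
      (fun x _ => (hsm.differentiable (by norm_num)).differentiableAt) hbd
      (Metric.mem_ball_self hr0) hθ
    refine h1.trans ?_
    rw [mem_ball_iff_norm] at hθ
    gcongr
  exact (convex_ball θ0 r).norm_image_sub_le_of_norm_hasFDerivWithin_le' (𝕜 := ℝ)
    (fun x _ => ((h2.differentiable (by norm_num)) x).hasFDerivAt.hasFDerivWithinAt) hL
    (by rwa [mem_ball_iff_norm]) (by rwa [mem_ball_iff_norm])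

lemma os_taylor {d : ℕ} (f : EuclideanSpace ℝ (Fin d) → ℝ) (hf : ContDiff ℝ 3 f)
    (D : EuclideanSpace ℝ (Fin d) → EuclideanSpace ℝ (Fin d))
    (D2 : EuclideanSpace ℝ (Fin d) → Matrix (Fin d) (Fin d) ℝ)
    (hD : ∀ θ, HasGradientAt f (D θ) θ)
    (hD2 : ∀ θ i, HasGradientAt (fun θ => D θ i) (toEuc fun j => D2 θ i j) θ)
    (θ0 : EuclideanSpace ℝ (Fin d)) (δ K : ℝ)
    (hK : ∀ θ, ‖θ - θ0‖ < δ → ‖iteratedFDeriv ℝ 3 f θ‖ ≤ K)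
    (r : ℝ) (hr0 : 0 < r) (hr : r ≤ δ) (a b : EuclideanSpace ℝ (Fin d)) (ha : ‖a - θ0‖ < r)
    (hb : ‖b - θ0‖ < r) :
    ‖D a - D b - osM (D2 θ0) (a - b)‖ ≤ K * r * ‖a - b‖ := by
  have hDD : ∀ θ, HasFDerivAt D (osM (D2 θ)) θ := by
    intro θ
    rw [← hasFDerivWithinAt_univ, hasFDerivWithinAt_euclidean]
    intro i
    rw [hasFDerivWithinAt_univ]
    convert (hD2 θ i).hasFDerivAt using 1
    ext v
    simp [toEuc, PiLp.inner_apply, Matrix.mulVec, dotProduct, mul_comm]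
  have h2 : ContDiff ℝ 2 (fderiv ℝ f) := hf.fderiv_right (by norm_num)
  have hF : ∀ θ v, fderiv ℝ f θ v = inner ℝ (D θ) v := by
    intro θ v
    rw [(hD θ).hasFDerivAt.fderiv]
    simp
  have hG : ∀ w v, fderiv ℝ (fderiv ℝ f) θ0 w v = inner ℝ (osM (D2 θ0) w) v := by
    intro w v
    have h3 : HasFDerivAt (fun θ => fderiv ℝ f θ v)
        ((fderiv ℝ (fderiv ℝ f) θ0).flip v) θ0 := by
      have := ((h2.differentiable (by norm_num)) θ0).hasFDerivAt.clm_apply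
        (hasFDerivAt_const v θ0)
      simpa using this
    have h4 : HasFDerivAt (fun θ => inner ℝ v (D θ)) ((innerSL ℝ v) ∘L osM (D2 θ0)) θ0 :=
      (innerSL ℝ v).hasFDerivAt.comp θ0 (hDD θ0)
    have e : (fun θ => fderiv ℝ f θ v) = fun θ => inner ℝ v (D θ) := by
      funext θ; rw [hF, real_inner_comm]
    rw [e] at h3
    have := DFunLike.congr_fun (h3.unique h4) w
    rw [real_inner_comm]
    simpa using this
  have h5 := os_taylor_gen (fderiv ℝ f) h2 θ0 δ K
    (fun θ hθ => by rw [norm_iteratedFDeriv_fderiv]; exact hK θ hθ) r hr0 hr a b ha hb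
  set L := fderiv ℝ f a - fderiv ℝ f b - fderiv ℝ (fderiv ℝ f) θ0 (a - b) with hLdef
  set y := D a - D b - osM (D2 θ0) (a - b) with hy
  have hLy : L y = ‖y‖ ^ 2 := by
    rw [← real_inner_self_eq_norm_sq]
    conv_rhs => rw [hy, inner_sub_left, inner_sub_left, ← hF, ← hF, ← hG, ← hy]
    rfl
  have h6 : ‖y‖ ^ 2 ≤ ‖L‖ * ‖y‖ := by
    rw [← hLy]; exact (le_abs_self _).trans (L.le_opNorm y)
  refine le_trans ?_ h5
  by_contra hcon
  push Not at hcon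
  nlinarith [norm_nonneg L, norm_nonneg y]

lemma os_lln {𝒳 Ω : Type*} [MeasurableSpace 𝒳] [MeasurableSpace Ω] (P : Measure Ω)
    [IsProbabilityMeasure P] (ν : Measure 𝒳)
    (X : ℕ → Ω → 𝒳) (hXm : ∀ i, Measurable (X i)) (hiid : iIndepFun X P)
    (hdist : ∀ i, Measure.map (X i) P = ν) (φ : 𝒳 → ℝ) (hφ : Integrable φ ν) (ε : ℝ) (hε : 0 < ε) :
    Tendsto (fun n : ℕ => P {ω | ε ≤ |(n:ℝ)⁻¹ * ∑ i ∈ Finset.range n, φ (X i ω) - ∫ x, φ x ∂ν|})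
      atTop (𝓝 0) := by
  have hm : ∀ i, AEMeasurable φ (Measure.map (X i) P) := fun i => by
    rw [hdist i]; exact hφ.aemeasurable
  have hint : ∀ i, Integrable (φ ∘ X i) P := fun i =>
    (integrable_map_measure (hm i).aestronglyMeasurable (hXm i).aemeasurable).1
      (by rw [hdist i]; exact hφ)
  have hsl := strong_law_ae_real (μ := P) (fun i => φ ∘ X i) (hint 0)
    (fun i j hij => (hiid.indepFun hij).comp₀ (hXm i).aemeasurable (hXm j).aemeasurable (hm i) (hm j))
    (fun i => IdentDistrib.comp_of_aemeasurable
      ⟨(hXm i).aemeasurable, (hXm 0).aemeasurable, by rw [hdist, hdist]⟩ (hm i))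
  have hE : ∫ ω, (φ ∘ X 0) ω ∂P = ∫ x, φ x ∂ν := by
    rw [← hdist 0, integral_map (hXm 0).aemeasurable (hm 0).aestronglyMeasurable]; rfl
  have hsl' : ∀ᵐ ω ∂P, Tendsto (fun n : ℕ => (n:ℝ)⁻¹ * ∑ i ∈ Finset.range n, φ (X i ω)) atTop
      (𝓝 (∫ x, φ x ∂ν)) := by
    filter_upwards [hsl] with ω hω
    rw [hE] at hω
    refine hω.congr fun n => ?_
    rw [div_eq_inv_mul]; rfl
  have hms : ∀ n : ℕ, AEStronglyMeasurable
      (fun ω => (n:ℝ)⁻¹ * ∑ i ∈ Finset.range n, φ (X i ω)) P := by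
    intro n
    refine AEStronglyMeasurable.const_mul ?_ _
    exact Finset.aestronglyMeasurable_fun_sum _ fun i _ => (hint i).aestronglyMeasurable
  have := tendstoInMeasure_of_tendsto_ae (g := fun _ => ∫ x, φ x ∂ν) hms hsl'
  rw [tendstoInMeasure_iff_norm] at this
  exact this ε hε

lemma os_final {d : ℕ} {C H A : EuclideanSpace ℝ (Fin d) →L[ℝ] EuclideanSpace ℝ (Fin d)}
    {c τ : ℝ} (hH : ∀ v, c * ‖v‖ ^ 2 ≤ inner ℝ (H v) v)
    (hτ : τ ≤ c / 2) (hC : ‖C - H‖ ≤ τ) (hA : ‖A - H‖ ≤ τ) (Δ v G : EuclideanSpace ℝ (Fin d))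
    (hG : ‖G - A v‖ ≤ τ * ‖v‖)
    (hb : inner ℝ (C Δ) Δ ≤ inner ℝ (C v - G) Δ) : c / 2 * ‖Δ‖ ≤ 3 * τ * ‖v‖ := by
  have h1 : ‖(C - H) Δ‖ ≤ τ * ‖Δ‖ := (C - H).le_of_opNorm_le hC Δ
  have h2 : -(τ * ‖Δ‖ * ‖Δ‖) ≤ inner ℝ ((C - H) Δ) Δ := by
    have := neg_le_of_abs_le (abs_real_inner_le_norm ((C - H) Δ) Δ)
    refine le_trans ?_ this
    have := mul_le_mul_of_nonneg_right h1 (norm_nonneg Δ)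
    linarith
  have e1 : inner ℝ (C Δ) Δ = inner ℝ ((C - H) Δ) Δ + inner ℝ (H Δ) Δ := by
    rw [← inner_add_left]; simp
  have h3 : ‖C v - G‖ ≤ 3 * τ * ‖v‖ := by
    have e : C v - G = (C - H) v - (A - H) v - (G - A v) := by simp
    rw [e]
    have := norm_sub_le ((C - H) v - (A - H) v) (G - A v)
    have := norm_sub_le ((C - H) v) ((A - H) v)
    have := (C - H).le_of_opNorm_le hC v
    have := (A - H).le_of_opNorm_le hA v
    linarith
  have h4 : inner ℝ (C v - G) Δ ≤ 3 * τ * ‖v‖ * ‖Δ‖ :=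
    (real_inner_le_norm _ _).trans (by gcongr)
  have h5 := hH Δ
  have hτ0 : 0 ≤ τ := (norm_nonneg _).trans hC
  by_cases hΔ : ‖Δ‖ = 0
  · rw [hΔ]; simp; positivity
  have hp : 0 < ‖Δ‖ := lt_of_le_of_ne (norm_nonneg _) (Ne.symm hΔ)
  have h6 : τ * ‖Δ‖ * ‖Δ‖ ≤ c / 2 * ‖Δ‖ * ‖Δ‖ := by gcongr
  refine le_of_mul_le_mul_right ?_ hp
  nlinarith

lemma os_lln_mat {d : ℕ} (hd : 1 ≤ d) {𝒳 Ω : Type*} [MeasurableSpace 𝒳] [MeasurableSpace Ω]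
    (P : Measure Ω) [IsProbabilityMeasure P] (ν : Measure 𝒳)
    (X : ℕ → Ω → 𝒳) (hXm : ∀ i, Measurable (X i)) (hiid : iIndepFun X P)
    (hdist : ∀ i, Measure.map (X i) P = ν) (φ : 𝒳 → Matrix (Fin d) (Fin d) ℝ)
    (hφ : ∀ i j, Integrable (fun x => φ x i j) ν)
    (Hm : Matrix (Fin d) (Fin d) ℝ) (hHm : ∀ i j, Hm i j = ∫ x, φ x i j ∂ν)
    (ε : ℝ) (hε : 0 < ε) :
    Tendsto (fun n : ℕ => P {ω | ε ≤ ‖osM ((n:ℝ)⁻¹ • ∑ k ∈ Finset.range n, φ (X k ω)) - osM Hm‖})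
      atTop (𝓝 0) := by
  have hd0 : (0:ℝ) < d := by exact_mod_cast hd
  have : NeZero d := ⟨by omega⟩
  set ε' := ε / (d * d) with hε'
  have hε'0 : 0 < ε' := by positivity
  let B : Fin d × Fin d → ℕ → Set Ω := fun q n => {ω | ε' ≤ |(n:ℝ)⁻¹ * ∑ k ∈ Finset.range n, φ (X k ω) q.1 q.2 -
    ∫ x, φ x q.1 q.2 ∂ν|}
  have hB : ∀ q, Tendsto (fun n => P (B q n)) atTop (𝓝 0) := fun q =>
    os_lln P ν X hXm hiid hdist (fun x => φ x q.1 q.2) (hφ q.1 q.2) ε' hε'0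
  have hS : Tendsto (fun n => ∑ q, P (B q n)) atTop (𝓝 0) := by
    have := tendsto_finsetSum (Finset.univ : Finset (Fin d × Fin d)) (fun q _ => hB q)
    simpa using this
  refine tendsto_of_tendsto_of_tendsto_of_le_of_le tendsto_const_nhds hS (fun _ => zero_le) ?_
  intro n
  refine le_trans (measure_mono ?_) (measure_iUnion_fintype_le P (fun q => B q n))
  intro ω hω
  have hω' : ε ≤ ‖osM ((n:ℝ)⁻¹ • ∑ k ∈ Finset.range n, φ (X k ω)) - osM Hm‖ := hω
  rw [← map_sub] at hω'
  have h1 := hω'.trans (os_matNorm_le _)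
  rw [← Finset.sum_product', Finset.univ_product_univ] at h1
  have h2 : ∑ _q : Fin d × Fin d, ε' = ε := by
    simp [hε']; field_simp
  rw [← h2] at h1
  obtain ⟨q, -, hq⟩ := Finset.exists_le_of_sum_le Finset.univ_nonempty h1
  refine Set.mem_iUnion.2 ⟨q, ?_⟩
  change ε' ≤ _
  simpa [hHm, Matrix.sum_apply] using hq

lemma os_avg {d : ℕ} {𝒳 : Type*} (n : ℕ) (hn : 0 < n) (x : ℕ → 𝒳)
    (D : 𝒳 → EuclideanSpace ℝ (Fin d)) (D' : 𝒳 → EuclideanSpace ℝ (Fin d))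
    (D2 : 𝒳 → Matrix (Fin d) (Fin d) ℝ) (K : 𝒳 → ℝ) (r : ℝ) (v : EuclideanSpace ℝ (Fin d))
    (h : ∀ y, ‖D y - D' y - osM (D2 y) v‖ ≤ K y * r * ‖v‖) :
    ‖((-(n:ℝ)⁻¹) • ∑ i ∈ Finset.range n, D (x i)) - ((-(n:ℝ)⁻¹) • ∑ i ∈ Finset.range n, D' (x i))
      - (-osM ((n:ℝ)⁻¹ • ∑ i ∈ Finset.range n, D2 (x i))) v‖ ≤
      ((n:ℝ)⁻¹ * ∑ i ∈ Finset.range n, K (x i)) * r * ‖v‖ := by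
  have e : ((-(n:ℝ)⁻¹) • ∑ i ∈ Finset.range n, D (x i)) -
      ((-(n:ℝ)⁻¹) • ∑ i ∈ Finset.range n, D' (x i))
      - (-osM ((n:ℝ)⁻¹ • ∑ i ∈ Finset.range n, D2 (x i))) v =
      (-(n:ℝ)⁻¹) • ∑ i ∈ Finset.range n, (D (x i) - D' (x i) - osM (D2 (x i)) v) := by
    rw [os_smul_sum, Finset.sum_sub_distrib, Finset.sum_sub_distrib, smul_sub, smul_sub]
    simp [ContinuousLinearMap.sum_apply]
  rw [e, norm_smul, mul_assoc, mul_assoc]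
  have : ‖-(n:ℝ)⁻¹‖ = (n:ℝ)⁻¹ := by simp
  rw [this]
  gcongr
  refine (norm_sum_le _ _).trans ?_
  rw [Finset.sum_mul]
  refine Finset.sum_le_sum fun i _ => ?_
  rw [← mul_assoc]; exact h _

end helpers

open MeasureTheory Filter Topology ProbabilityTheory in
/-- Proposition 2.3: for regularized maximum likelihood from an iid sample, under the stated
regularity conditions on the log-density and the scaling matrices, the one-step estimator given
by a single scaled proximal gradient step from any `√n`-consistent initial estimator is
asymptotically equivalent to the penalized maximum likelihood estimator `θ̂ₙ`. -/
theorem one_step_regularized_mle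
    (d : ℕ) (hd : 1 ≤ d)
    {𝒳 : Type*} [MeasurableSpace 𝒳] (μ : MeasureTheory.Measure 𝒳) [SigmaFinite μ]
    (Θ : Set (EuclideanSpace ℝ (Fin d))) (hΘ : IsOpen Θ)
    (θstar θ0 : EuclideanSpace ℝ (Fin d)) (hθstar : θstar ∈ Θ) (hθ0 : θ0 ∈ Θ)
    -- the parametric family of densities
    (p : EuclideanSpace ℝ (Fin d) → 𝒳 → ℝ)
    (hpos : ∀ θ x, 0 < p θ x)
    (hdens : ∀ θ ∈ Θ, ∫⁻ x, ENNReal.ofReal (p θ x) ∂μ = 1)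
    -- ν is the distribution of each observation
    (ν : MeasureTheory.Measure 𝒳)
    (hν : ν = μ.withDensity fun x => ENNReal.ofReal (p θstar x))
    -- the iid sample
    {Ω : Type*} [MeasurableSpace Ω] (P : MeasureTheory.Measure Ω) [IsProbabilityMeasure P]
    (X : ℕ → Ω → 𝒳) (hXm : ∀ i, Measurable (X i))
    (hiid : iIndepFun X P)
    (hdist : ∀ i, MeasureTheory.Measure.map (X i) P = ν)
    -- (i): θ ↦ log p_θ(x) is three times differentiable, with gradient dℓ and Hessian d2ℓ
    (dℓ : EuclideanSpace ℝ (Fin d) → 𝒳 → EuclideanSpace ℝ (Fin d))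
    (d2ℓ : EuclideanSpace ℝ (Fin d) → 𝒳 → Matrix (Fin d) (Fin d) ℝ)
    (hsmooth : ∀ x, ContDiff ℝ 3 fun θ => Real.log (p θ x))
    (hgrad : ∀ x θ, HasGradientAt (fun θ => Real.log (p θ x)) (dℓ θ x) θ)
    (hhess : ∀ x θ i, HasGradientAt (fun θ => dℓ θ x i) (toEuc fun j => d2ℓ θ x i j) θ)
    -- (ii): E[∇²log p_{θ₀}(X₁)] exists and is negative definite
    (Hm : Matrix (Fin d) (Fin d) ℝ)
    (hHmInt : ∀ i j, MeasureTheory.Integrable (fun x => d2ℓ θ0 x i j) ν)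
    (hHm : ∀ i j, Hm i j = ∫ x, d2ℓ θ0 x i j ∂ν)
    (hnegdef : (-Hm).PosDef)
    -- (iii): the third-order partial derivatives of log p_θ are dominated by a fixed
    -- integrable function for θ in a neighborhood of θ₀
    (K : 𝒳 → ℝ) (hKint : MeasureTheory.Integrable K ν)
    (hdom : ∃ δ : ℝ, 0 < δ ∧ ∀ θ : EuclideanSpace ℝ (Fin d), ‖θ - θ0‖ < δ → ∀ x,
      ‖iteratedFDeriv ℝ 3 (fun θ => Real.log (p θ x)) θ‖ ≤ K x)
    -- the penalty hₙ is proper and convex a.s., the scaling matrices positive definite a.s.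
    (h : ℕ → Ω → EuclideanSpace ℝ (Fin d) → EReal)
    (hh : ∀ n, ∀ᵐ ω ∂P, ConvexFnE (h n ω) ∧ ProperFn (h n ω))
    (C : ℕ → Ω → Matrix (Fin d) (Fin d) ℝ)
    (hC : ∀ n, ∀ᵐ ω ∂P, (C n ω).PosDef)
    -- (iv): −Cₙ⁻¹ E[∇²log p_{θ₀}(X₁)] → I in probability
    (hCn : ∀ ε : ℝ, 0 < ε →
      Tendsto (fun n => P {ω | ε ≤ matNorm ((C n ω)⁻¹ * (-Hm) - 1)}) atTop (𝓝 0))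
    -- θ̂ₙ minimizes gₙ + hₙ a.s., where gₙ is the negative mean log-likelihood
    (θhat θinit θose : ℕ → Ω → EuclideanSpace ℝ (Fin d))
    (hmin : ∀ n : ℕ, ∀ᵐ ω ∂P, ∀ θ : EuclideanSpace ℝ (Fin d),
      (((-(n : ℝ)⁻¹ * ∑ i ∈ Finset.range n, Real.log (p (θhat n ω) (X i ω)) : ℝ) : EReal) +
          h n ω (θhat n ω)) ≤
        ((-(n : ℝ)⁻¹ * ∑ i ∈ Finset.range n, Real.log (p θ (X i ω)) : ℝ) : EReal) + h n ω θ)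
    -- θ̂ₙ is √n-consistent for θ₀
    (hcons : BoundedInProb P (fun n ω => Real.sqrt n • (θhat n ω - θ0)))
    -- θ̂_init is a √n-consistent estimator of θ̂ₙ
    (hinit : BoundedInProb P (fun n ω => Real.sqrt n • (θinit n ω - θhat n ω)))
    -- the one-step estimator: a single scaled proximal gradient step from θ̂_init
    (hose : ∀ n, ∀ᵐ ω ∂P,
      θose n ω ∈ proxSet (h n ω) (C n ω)
        (θinit n ω -
          mApp (C n ω)⁻¹ ((-(n : ℝ)⁻¹) • ∑ i ∈ Finset.range n, dℓ (θinit n ω) (X i ω)))) :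
    -- conclusion: asymptotic equivalence of θ̂_ose and θ̂ₙ
    TendstoInProb P (fun n ω => Real.sqrt n • (θose n ω - θhat n ω)) := by
  obtain ⟨δ, hδ, hdom⟩ := hdom
  obtain ⟨c, hc, hcoer⟩ := os_coercive hd hnegdef
  intro ε hε
  rw [ENNReal.tendsto_nhds_zero]
  intro η hη
  -- a real fraction of η
  obtain ⟨q, hq0, hqη⟩ : ∃ q : ℝ, 0 < q ∧ ENNReal.ofReal q * 5 ≤ η := by
    have h1 : (min η 1) ≠ ⊤ := ne_top_of_le_ne_top ENNReal.one_ne_top (min_le_right _ _)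
    have h0 : (min η 1) ≠ 0 := (lt_min hη one_pos).ne'
    refine ⟨(min η 1 / 5).toReal, ENNReal.toReal_pos ?_ ?_, ?_⟩
    · exact (ENNReal.div_pos h0 (by norm_num)).ne'
    · exact ENNReal.div_ne_top h1 (by norm_num)
    · rw [ENNReal.ofReal_toReal (ENNReal.div_ne_top h1 (by norm_num)),
        ENNReal.div_mul_cancel (by norm_num) (by norm_num)]
      exact min_le_left _ _
  have hq' : 0 < ENNReal.ofReal q := ENNReal.ofReal_pos.2 hq0
  obtain ⟨M1, N1, hM1⟩ := hcons q hq0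
  obtain ⟨M2, N2, hM2⟩ := hinit q hq0
  set M := max M2 1 with hM
  have hMpos : 0 < M := lt_of_lt_of_le one_pos (le_max_right _ _)
  set τ := min (c / 2) (c * ε / (8 * M)) with hτ
  have hτ0 : 0 < τ := lt_min (by positivity) (by positivity)
  set e := min (1 / 2) (τ / (2 * ‖osM (-Hm)‖ + 1)) with he
  have hH0 := norm_nonneg (osM (-Hm))
  have he0 : 0 < e := lt_min (by norm_num) (by positivity)
  have heτ : 2 * ‖osM (-Hm)‖ * e ≤ τ := by
    have h1 : e ≤ τ / (2 * ‖osM (-Hm)‖ + 1) := min_le_right _ _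
    rw [le_div_iff₀ (by positivity)] at h1
    nlinarith
  set κ := ∫ x, K x ∂ν with hκ
  set R := |M1| + M + 1 with hR
  have hRpos : 0 < R := by positivity
  have hr : Tendsto (fun n : ℕ => R / Real.sqrt n) atTop (𝓝 0) :=
    tendsto_const_nhds.div_atTop (Real.tendsto_sqrt_atTop.comp tendsto_natCast_atTop_atTop)
  have hr1 : ∀ᶠ n : ℕ in atTop, R / Real.sqrt n < δ := hr.eventually_lt_const hδ
  have hr2 : ∀ᶠ n : ℕ in atTop, R / Real.sqrt n < τ / (|κ| + 1) :=
    hr.eventually_lt_const (by positivity)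
  have hB3 := (ENNReal.tendsto_nhds_zero.1 (hCn e he0)) _ hq'
  have hB4 := (ENNReal.tendsto_nhds_zero.1
    (os_lln P ν X hXm hiid hdist K hKint 1 one_pos)) _ hq'
  have hB5 := (ENNReal.tendsto_nhds_zero.1
    (os_lln_mat hd P ν X hXm hiid hdist (d2ℓ θ0) hHmInt Hm hHm τ hτ0)) _ hq'
  filter_upwards [hr1, hr2, hB3, hB4, hB5, eventually_ge_atTop N1, eventually_ge_atTop N2,
    eventually_gt_atTop 0] with n hr1 hr2 hB3 hB4 hB5 hN1 hN2 hn
  have hB1 := hM1 n hN1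
  have hB2 := hM2 n hN2
  refine le_trans ?_ hqη
  set B1 := {ω | M1 < ‖Real.sqrt n • (θhat n ω - θ0)‖} with hB1d
  set B2 := {ω | M2 < ‖Real.sqrt n • (θinit n ω - θhat n ω)‖} with hB2d
  set B3 := {ω | e ≤ matNorm ((C n ω)⁻¹ * (-Hm) - 1)} with hB3d
  set B4 := {ω | 1 ≤ |(n:ℝ)⁻¹ * ∑ i ∈ Finset.range n, K (X i ω) - ∫ x, K x ∂ν|} with hB4d
  set B5 := {ω | τ ≤ ‖osM ((n:ℝ)⁻¹ • ∑ k ∈ Finset.range n, d2ℓ θ0 (X k ω)) - osM Hm‖} with hB5d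
  have hbound : P (B1 ∪ B2 ∪ B3 ∪ B4 ∪ B5) ≤ ENNReal.ofReal q * 5 := by
    calc P (B1 ∪ B2 ∪ B3 ∪ B4 ∪ B5) ≤ P B1 + P B2 + P B3 + P B4 + P B5 := by
          refine (measure_union_le _ _).trans ?_
          gcongr
          refine (measure_union_le _ _).trans ?_
          gcongr
          refine (measure_union_le _ _).trans ?_
          gcongr
          exact measure_union_le _ _
      _ ≤ ENNReal.ofReal q + ENNReal.ofReal q + ENNReal.ofReal q + ENNReal.ofReal q
          + ENNReal.ofReal q := by gcongr
      _ = _ := by ring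
  refine le_trans (measure_mono_ae ?_) hbound
  filter_upwards [hh n, hC n, hmin n, hose n] with ω hhω hCω hminω hoseω
  intro hεω
  have hεω' : ε ≤ ‖Real.sqrt n • (θose n ω - θhat n ω)‖ := hεω
  by_contra hnot
  have hnot' : ω ∉ B1 ∪ B2 ∪ B3 ∪ B4 ∪ B5 := hnot
  simp only [Set.mem_union, not_or] at hnot'
  obtain ⟨⟨⟨⟨n1, n2⟩, n3⟩, n4⟩, n5⟩ := hnot'
  have n1 : ‖Real.sqrt n • (θhat n ω - θ0)‖ ≤ M1 := not_lt.1 n1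
  have n2 : ‖Real.sqrt n • (θinit n ω - θhat n ω)‖ ≤ M2 := not_lt.1 n2
  have n3 : matNorm ((C n ω)⁻¹ * (-Hm) - 1) < e := not_le.1 n3
  have n4 : |(n:ℝ)⁻¹ * ∑ i ∈ Finset.range n, K (X i ω) - ∫ x, K x ∂ν| < 1 := not_le.1 n4
  have n5 : ‖osM ((n:ℝ)⁻¹ • ∑ k ∈ Finset.range n, d2ℓ θ0 (X k ω)) - osM Hm‖ < τ := not_le.1 n5
  have hs : 0 < Real.sqrt n := Real.sqrt_pos.2 (by exact_mod_cast hn)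
  rw [norm_smul, Real.norm_of_nonneg hs.le] at n1 n2 hεω'
  set r := R / Real.sqrt n with hrd
  have hr0 : 0 < r := by positivity
  have ha : ‖θhat n ω - θ0‖ < r := by
    rw [hrd, lt_div_iff₀ hs]
    have := le_abs_self M1
    linarith
  have hb : ‖θinit n ω - θ0‖ < r := by
    rw [hrd, lt_div_iff₀ hs]
    have h1 := le_abs_self M1
    have h2 : M2 ≤ M := le_max_left _ _
    have h3 := norm_add_le (θinit n ω - θhat n ω) (θhat n ω - θ0)
    rw [sub_add_sub_cancel] at h3
    nlinarith
  have htay := fun y => os_taylor (fun θ => Real.log (p θ y)) (hsmooth y) (fun θ => dℓ θ y)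
    (fun θ => d2ℓ θ y) (hgrad y) (hhess y) θ0 δ (K y) (fun θ hθ => hdom θ hθ y) r hr0 hr1.le
    (θinit n ω) (θhat n ω) hb ha
  have havg := os_avg n hn (fun i => X i ω) (fun y => dℓ (θinit n ω) y) (fun y => dℓ (θhat n ω) y)
    (fun y => d2ℓ θ0 y) K r (θinit n ω - θhat n ω) htay
  have hKr : ((n:ℝ)⁻¹ * ∑ i ∈ Finset.range n, K (X i ω)) * r ≤ τ := by
    have h1 : (n:ℝ)⁻¹ * ∑ i ∈ Finset.range n, K (X i ω) ≤ |κ| + 1 := by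
      have := (abs_lt.1 n4).2
      have := le_abs_self κ
      linarith
    rw [lt_div_iff₀ (by positivity)] at hr2
    nlinarith
  have hgradg : HasGradientAt
      (fun θ => -(n : ℝ)⁻¹ * ∑ i ∈ Finset.range n, Real.log (p θ (X i ω)))
      ((-(n : ℝ)⁻¹) • ∑ i ∈ Finset.range n, dℓ (θhat n ω) (X i ω)) (θhat n ω) := by
    rw [hasGradientAt_iff_hasFDerivAt]
    have h1 := (HasFDerivAt.fun_sum (u := Finset.range n) fun i _ =>
      (hgrad (X i ω) (θhat n ω)).hasFDerivAt).const_mul (-(n : ℝ)⁻¹)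
    refine h1.congr_fderiv ?_
    rw [map_smulₛₗ, map_sum]
    simp
  have hbas := os_basic hhω.1 hhω.2 hCω
    (fun θ => -(n : ℝ)⁻¹ * ∑ i ∈ Finset.range n, Real.log (p θ (X i ω)))
    (θhat n ω) (θinit n ω) (θose n ω) _ _ hgradg hminω hoseω
  have hCc := (os_C_close hCω (min_le_left _ _) n3.le).trans heτ
  have hA : ‖-osM ((n:ℝ)⁻¹ • ∑ k ∈ Finset.range n, d2ℓ θ0 (X k ω)) - osM (-Hm)‖ ≤ τ := by
    rw [os_neg, neg_sub_neg, norm_sub_rev]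
    exact n5.le
  have hfin := os_final hcoer (min_le_left _ _) hCc hA _ _ _
    (havg.trans (mul_le_mul_of_nonneg_right hKr (norm_nonneg _))) hbas
  have hM2M : M2 ≤ M := le_max_left _ _
  have hτM : τ * (8 * M) ≤ c * ε := by
    have : τ ≤ c * ε / (8 * M) := min_le_right _ _
    rwa [le_div_iff₀ (by positivity)] at this
  have f1 := mul_le_mul_of_nonneg_left hfin hs.le
  have f2 : 3 * τ * (Real.sqrt n * ‖θinit n ω - θhat n ω‖) ≤ 3 * τ * M := by
    gcongr; exact n2.trans hM2M
  have f3 : c / 2 * ε ≤ c / 2 * (Real.sqrt n * ‖θose n ω - θhat n ω‖) := by gcongr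
  have f4 : 0 < c * ε := by positivity
  nlinarith
end

section
/- Let f : ℝ^d → ℝ ∪ {∞} be proper and let C be a symmetric positive definite d×d matrix such that the set prox_f^C(x) is nonempty for every x (so the scaled Moreau envelope e_C f is real-valued). Fix x* ∈ ℝ^d and suppose there exists w* ∈ prox_f^C(x*) such that for every sequence u^ν → 0 there exist w^ν ∈ prox_f^C(x* + u^ν) with w^ν → w*. Then e_C f is (Fréchet) differentiable at x*, with gradient ∇e_C f(x*) = C(x* − w*). -/
open MeasureTheory Filter Topology ProbabilityTheory

/-- The scaled Moreau envelope `e_C f(x) = inf_w { f(w) + (1/2)‖x − w‖_C² }`. -/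
noncomputable def moreauEnv {d : ℕ} (C : Matrix (Fin d) (Fin d) ℝ)
    (f : EuclideanSpace ℝ (Fin d) → EReal) (x : EuclideanSpace ℝ (Fin d)) : EReal :=
  ⨅ w, f w + ((cnormSq C (x - w) / 2 : ℝ) : EReal)

/-- real values -/
lemma env_eq {d : ℕ} (f : EuclideanSpace ℝ (Fin d) → EReal) (hproper : ProperFn f)
    (C : Matrix (Fin d) (Fin d) ℝ) (x w : EuclideanSpace ℝ (Fin d)) (hw : w ∈ proxSet f C x) :
    f w = ((f w).toReal : EReal) ∧
    (moreauEnv C f x).toReal = (f w).toReal + cnormSq C (x - w) / 2 ∧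
    moreauEnv C f x = ((moreauEnv C f x).toReal : EReal) := by
  have hsym : ∀ v : EuclideanSpace ℝ (Fin d), cnormSq C (v - x) = cnormSq C (x - v) := by
    intro v
    rw [← neg_sub x v]
    simp only [cnormSq, mApp, map_neg, inner_neg_neg]
  have hnt : f w ≠ ⊤ := by
    intro h
    obtain ⟨y, hy⟩ := hproper.1
    have := hw y
    rw [h, EReal.top_add_coe, top_le_iff] at this
    lift f y to ℝ using ⟨hy, hproper.2 y⟩ with r
    rw [← EReal.coe_add] at this
    exact EReal.coe_ne_top _ this
  have h1 : f w = ((f w).toReal : EReal) := (EReal.coe_toReal hnt (hproper.2 w)).symm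
  have h2 : moreauEnv C f x = (((f w).toReal + cnormSq C (x - w) / 2 : ℝ) : EReal) := by
    rw [EReal.coe_add, ← h1]
    apply le_antisymm
    · exact iInf_le _ w
    · refine le_iInf fun u => ?_
      have := hw u
      rwa [hsym, hsym] at this
  refine ⟨h1, ?_, ?_⟩
  · rw [h2, EReal.toReal_coe]
  · rw [h2, EReal.toReal_coe]

lemma cnormSq_expand {d : ℕ} (C : Matrix (Fin d) (Fin d) ℝ) (hC : C.PosDef)
    (v u : EuclideanSpace ℝ (Fin d)) :
    cnormSq C (v + u) = cnormSq C v + 2 * inner ℝ (mApp C v) u + cnormSq C u := by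
  have hs : (Matrix.toEuclideanLin C).IsSymmetric :=
    Matrix.isSymmetric_toEuclideanLin_iff.mpr hC.isHermitian
  have := hs v u
  simp only [cnormSq, mApp, map_add, inner_add_left, inner_add_right] at *
  rw [← this, real_inner_comm u]
  ring

lemma cnormSq_nonneg {d : ℕ} (C : Matrix (Fin d) (Fin d) ℝ) (hC : C.PosDef)
    (v : EuclideanSpace ℝ (Fin d)) : 0 ≤ cnormSq C v := by
  have := (Matrix.isPositive_toEuclideanLin_iff.mpr hC.posSemidef).2 v
  rw [cnormSq, mApp, real_inner_comm]
  simpa using this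

lemma env_upper {d : ℕ} (f : EuclideanSpace ℝ (Fin d) → EReal) (hproper : ProperFn f)
    (C : Matrix (Fin d) (Fin d) ℝ) (hC : C.PosDef) (x y w z : EuclideanSpace ℝ (Fin d))
    (hw : w ∈ proxSet f C x) (hz : z ∈ proxSet f C y) :
    (moreauEnv C f y).toReal ≤ (moreauEnv C f x).toReal + inner ℝ (mApp C (x - w)) (y - x)
      + cnormSq C (y - x) / 2 := by
  obtain ⟨h1, h2, -⟩ := env_eq f hproper C x w hw
  obtain ⟨-, -, h3⟩ := env_eq f hproper C y z hz
  have h4 : moreauEnv C f y ≤ f w + ((cnormSq C (y - w) / 2 : ℝ) : EReal) := iInf_le _ w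
  rw [h3, h1, ← EReal.coe_add, EReal.coe_le_coe_iff] at h4
  have h5 := cnormSq_expand C hC (x - w) (y - x)
  rw [show x - w + (y - x) = y - w by abel] at h5
  linarith

lemma env_est {d : ℕ} (f : EuclideanSpace ℝ (Fin d) → EReal) (hproper : ProperFn f)
    (C : Matrix (Fin d) (Fin d) ℝ) (hC : C.PosDef) (x y w z : EuclideanSpace ℝ (Fin d))
    (hw : w ∈ proxSet f C x) (hz : z ∈ proxSet f C y) :
    ‖y - x‖⁻¹ * ‖(moreauEnv C f y).toReal - (moreauEnv C f x).toReal
      - inner ℝ (mApp C (x - w)) (y - x)‖ ≤ ‖mApp C (y - x)‖ + ‖mApp C (w - z)‖ := by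
  have hu := env_upper f hproper C hC x y w z hw hz
  have hl := env_upper f hproper C hC y x z w hz hw
  have e0 : mApp C (y - z) = mApp C (x - w) + mApp C (y - x) + mApp C (w - z) := by
    simp only [mApp, ← map_add]
    congr 1
    abel
  have e1 : cnormSq C (x - y) = cnormSq C (y - x) := by
    rw [← neg_sub y x]
    simp only [cnormSq, mApp, map_neg, inner_neg_neg]
  have e2 : (inner ℝ (mApp C (y - x)) (y - x) : ℝ) = cnormSq C (y - x) := real_inner_comm _ _
  rw [e0, e1, ← neg_sub y x, inner_neg_right, inner_add_left, inner_add_left, e2] at hl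
  have hn := cnormSq_nonneg C hC (y - x)
  have hb1 := abs_le.mp (abs_real_inner_le_norm (mApp C (w - z)) (y - x))
  have hb2 := abs_le.mp (abs_real_inner_le_norm (mApp C (y - x)) (y - x))
  rw [e2] at hb2
  have p1 : 0 ≤ ‖mApp C (w - z)‖ * ‖y - x‖ := by positivity
  rcases eq_or_ne (y - x) 0 with h | h
  · rw [h]
    simp only [norm_zero, inv_zero, zero_mul]
    positivity
  · rw [inv_mul_le_iff₀ (norm_pos_iff.mpr h), Real.norm_eq_abs, abs_le]
    constructor <;> nlinarith

/-- Proposition 4.1 (differentiability of the scaled Moreau envelope): if the proximal map is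
inner continuous at `x*` relative to some `w* ∈ prox_f^C(x*)`, then the (real-valued) scaled
Moreau envelope is differentiable at `x*` with gradient `C(x* − w*)`. -/
theorem moreau_envelope_differentiable
    (d : ℕ) (f : EuclideanSpace ℝ (Fin d) → EReal) (hproper : ProperFn f)
    (C : Matrix (Fin d) (Fin d) ℝ) (hC : C.PosDef)
    (hne : ∀ x, (proxSet f C x).Nonempty)
    (xstar wstar : EuclideanSpace ℝ (Fin d))
    (hw : wstar ∈ proxSet f C xstar)
    (hinner : ∀ u : ℕ → EuclideanSpace ℝ (Fin d), Filter.Tendsto u Filter.atTop (nhds 0) →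
      ∃ w : ℕ → EuclideanSpace ℝ (Fin d),
        (∀ ν, w ν ∈ proxSet f C (xstar + u ν)) ∧ Filter.Tendsto w Filter.atTop (nhds wstar)) :
    HasGradientAt (fun x => (moreauEnv C f x).toReal) (mApp C (xstar - wstar)) xstar := by
  rw [hasGradientAt_iff_tendsto]
  refine tendsto_of_seq_tendsto fun y hy => ?_
  have hu : Tendsto (fun n => y n - xstar) atTop (𝓝 0) := by
    simpa using hy.sub_const xstar
  obtain ⟨w, hwm, hwt⟩ := hinner _ hu
  have hc : Continuous (mApp C) := (Matrix.toEuclideanLin C).continuous_of_finiteDimensional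
  have hz : mApp C 0 = 0 := by simp [mApp]
  have t1 : Tendsto (fun n => ‖mApp C (y n - xstar)‖) atTop (𝓝 0) := by
    simpa [hz] using ((hc.tendsto 0).comp hu).norm
  have t2 : Tendsto (fun n => ‖mApp C (wstar - w n)‖) atTop (𝓝 0) := by
    have h0 : Tendsto (fun n => wstar - w n) atTop (𝓝 0) := by
      simpa using hwt.const_sub wstar
    simpa [hz] using ((hc.tendsto 0).comp h0).norm
  have t3 := t1.add t2
  rw [add_zero] at t3
  refine squeeze_zero (fun n => mul_nonneg (inv_nonneg.mpr (norm_nonneg _)) (norm_nonneg _)) (fun n => ?_) t3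
  have hm := hwm n
  rw [add_sub_cancel] at hm
  exact env_est f hproper C hC xstar (y n) wstar (w n) hw hm
end

section
/- Let h : ℝ^d → ℝ ∪ {∞} be proper and convex and let C be a symmetric positive definite d×d matrix with largest and smallest eigenvalues λ_max(C) and λ_min(C). Then for any x₁, x₂ ∈ ℝ^d and any w₁ ∈ prox_h^C(x₁), w₂ ∈ prox_h^C(x₂), one has ‖w₁ − w₂‖ ≤ √(λ_max(C)/λ_min(C)) · ‖x₁ − x₂‖ in the Euclidean norm; in particular prox_h^C is Lipschitz continuous with constant √(λ_max(C)/λ_min(C)). -/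
open MeasureTheory Filter Topology ProbabilityTheory

lemma mApp_symm_aux {d : ℕ} (C : Matrix (Fin d) (Fin d) ℝ) (hC : C.IsHermitian)
    (v w : EuclideanSpace ℝ (Fin d)) : inner ℝ (mApp C v) w = inner ℝ v (mApp C w) :=
  (Matrix.isSymmetric_toEuclideanLin_iff.mpr hC) v w

lemma cnormSq_eig_aux {d : ℕ} (C : Matrix (Fin d) (Fin d) ℝ) (hC : C.IsHermitian)
    (v : EuclideanSpace ℝ (Fin d)) :
    cnormSq C v = ∑ i, hC.eigenvalues i * (inner ℝ v (hC.eigenvectorBasis i)) ^ 2 := by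
  unfold cnormSq
  rw [← hC.eigenvectorBasis.sum_inner_mul_inner v (mApp C v)]
  refine Finset.sum_congr rfl fun i _ => ?_
  have h1 : mApp C (hC.eigenvectorBasis i) = hC.eigenvalues i • hC.eigenvectorBasis i := by
    unfold mApp
    ext j
    have := congrFun (hC.mulVec_eigenvectorBasis i) j
    simpa [Matrix.toEuclideanLin] using this
  rw [← mApp_symm_aux C hC, h1, real_inner_smul_left, real_inner_comm v]
  ring

lemma normSq_eig_aux {d : ℕ} (C : Matrix (Fin d) (Fin d) ℝ) (hC : C.IsHermitian)
    (v : EuclideanSpace ℝ (Fin d)) :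
    ‖v‖ ^ 2 = ∑ i, (inner ℝ v (hC.eigenvectorBasis i)) ^ 2 := by
  rw [← real_inner_self_eq_norm_sq, ← hC.eigenvectorBasis.sum_inner_mul_inner v v]
  refine Finset.sum_congr rfl fun i _ => ?_
  rw [real_inner_comm v]
  ring

lemma cnormSq_add_smul_aux {d : ℕ} (C : Matrix (Fin d) (Fin d) ℝ) (hC : C.IsHermitian)
    (v w : EuclideanSpace ℝ (Fin d)) (t : ℝ) :
    cnormSq C (v + t • w) = cnormSq C v + 2 * t * inner ℝ v (mApp C w) + t ^ 2 * cnormSq C w := by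
  have h2 : inner ℝ w (mApp C v) = inner ℝ v (mApp C w) := by
    rw [← mApp_symm_aux C hC, real_inner_comm]
  unfold cnormSq
  have h1 : mApp C (v + t • w) = mApp C v + t • mApp C w := by simp [mApp]
  rw [h1]
  simp only [inner_add_left, inner_add_right, real_inner_smul_left, real_inner_smul_right, h2]
  ring

lemma prox_finite_aux {d : ℕ} {h : EuclideanSpace ℝ (Fin d) → EReal} (hp : ProperFn h)
    {C : Matrix (Fin d) (Fin d) ℝ} {x w : EuclideanSpace ℝ (Fin d)} (hw : w ∈ proxSet h C x) :
    ∃ r : ℝ, h w = r := by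
  obtain ⟨⟨x0, hx0⟩, hb⟩ := hp
  have := hw x0
  have h2 : h w ≠ ⊤ := by
    intro h3
    rw [h3, EReal.top_add_coe, top_le_iff] at this
    exact EReal.add_ne_top hx0 (EReal.coe_ne_top _) this
  exact ⟨(h w).toReal, (EReal.coe_toReal h2 (hb w)).symm⟩

lemma prox_ineq_aux {d : ℕ} {h : EuclideanSpace ℝ (Fin d) → EReal} (hconv : ConvexFnE h)
    {C : Matrix (Fin d) (Fin d) ℝ} (hC : C.IsHermitian) {x w u : EuclideanSpace ℝ (Fin d)}
    (hw : w ∈ proxSet h C x) {r s : ℝ} (hr : h w = r) (hs : h u = s) (t : ℝ) (h0 : 0 ≤ t)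
    (h1 : t ≤ 1) :
    0 ≤ t * (s - r) + t * inner ℝ (w - x) (mApp C (u - w)) + t ^ 2 * cnormSq C (u - w) / 2 := by
  have a := hw ((1 - t) • w + t • u)
  have b := hconv w u (1 - t) t (by linarith) h0 (by ring)
  have c := a.trans (add_le_add_left b _)
  have e : (1 - t) • w + t • u - x = (w - x) + t • (u - w) := by module
  rw [hr, hs, e, cnormSq_add_smul_aux C hC] at c
  have c' : r + cnormSq C (w - x) / 2 ≤ ((1 - t) * r + t * s) + (cnormSq C (w - x) +
    2 * t * inner ℝ (w - x) (mApp C (u - w)) + t ^ 2 * cnormSq C (u - w)) / 2 := by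
    exact_mod_cast c
  linarith

/-- The scaled proximal operator of a proper convex function is Lipschitz continuous in the
Euclidean norm with constant `√(λ_max(C)/λ_min(C))`. -/
theorem scaled_prox_lipschitz
    (d : ℕ) (hd : 0 < d) (h : EuclideanSpace ℝ (Fin d) → EReal)
    (hproper : ProperFn h) (hconv : ConvexFnE h)
    (C : Matrix (Fin d) (Fin d) ℝ) (hC : C.PosDef)
    (x₁ x₂ w₁ w₂ : EuclideanSpace ℝ (Fin d))
    (hw₁ : w₁ ∈ proxSet h C x₁) (hw₂ : w₂ ∈ proxSet h C x₂) :
    ‖w₁ - w₂‖ ≤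
      Real.sqrt ((⨆ i, hC.1.eigenvalues i) / (⨅ i, hC.1.eigenvalues i)) * ‖x₁ - x₂‖ := by
  have hH := hC.1
  haveI : Nonempty (Fin d) := ⟨⟨0, hd⟩⟩
  obtain ⟨r, hr⟩ := prox_finite_aux hproper hw₁
  obtain ⟨s, hs⟩ := prox_finite_aux hproper hw₂
  set B : EuclideanSpace ℝ (Fin d) → EuclideanSpace ℝ (Fin d) → ℝ :=
    fun v w => inner ℝ v (mApp C w) with hB
  have neg : ∀ v, mApp C (-v) = - mApp C v := fun v => by simp [mApp]
  have hQn : cnormSq C (w₁ - w₂) = cnormSq C (w₂ - w₁) := by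
    rw [← neg_sub w₂ w₁]; unfold cnormSq; rw [neg, inner_neg_neg]
  have hQ : ∀ v, cnormSq C v = ∑ i, hC.1.eigenvalues i *
    (inner ℝ v (hC.1.eigenvectorBasis i)) ^ 2 := cnormSq_eig_aux C hC.1
  have hnn : ∀ v, 0 ≤ cnormSq C v := fun v => by
    rw [hQ]
    exact Finset.sum_nonneg fun i _ => mul_nonneg (hC.eigenvalues_pos i).le (sq_nonneg _)
  have hmono : 0 ≤ B (w₁ - x₁) (w₂ - w₁) + B (w₂ - x₂) (w₁ - w₂) := by
    by_contra! hneg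
    set q := cnormSq C (w₂ - w₁) with hq
    set m := B (w₁ - x₁) (w₂ - w₁) + B (w₂ - x₂) (w₁ - w₂) with hm
    have key : ∀ t : ℝ, 0 < t → t ≤ 1 → 0 ≤ m + t * q := by
      intro t h0 h1
      have a := prox_ineq_aux hconv hH hw₁ hr hs t h0.le h1
      have b := prox_ineq_aux hconv hH hw₂ hs hr t h0.le h1
      rw [hQn] at b
      have : 0 ≤ t * (m + t * q) := by
        simp only [hm, hB]
        linarith
      exact nonneg_of_mul_nonneg_right this h0
    have hq0 : 0 ≤ q := hnn _
    have k1 := key 1 one_pos le_rfl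
    have hqp : 0 < q := by linarith
    have k2 := key (-m / (2 * q)) (by apply div_pos <;> linarith)
      (by rw [div_le_one (by linarith)]; linarith)
    have : -m / (2 * q) * q = -m / 2 := by field_simp
    linarith
  have hle : cnormSq C (w₁ - w₂) ≤ B (x₁ - x₂) (w₁ - w₂) := by
    have e1 : B (w₁ - x₁) (w₂ - w₁) = - B (w₁ - x₁) (w₁ - w₂) := by
      simp only [hB]; rw [← neg_sub w₁ w₂, neg, inner_neg_right]
    have e2 : cnormSq C (w₁ - w₂) = B (w₁ - x₁) (w₁ - w₂) - B (w₂ - x₂) (w₁ - w₂)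
        + B (x₁ - x₂) (w₁ - w₂) := by
      simp only [hB, cnormSq]
      rw [← inner_sub_left, ← inner_add_left]
      congr 1
      abel
    linarith
  have hQle : cnormSq C (w₁ - w₂) ≤ cnormSq C (x₁ - x₂) := by
    have a := hnn ((x₁ - x₂) + (-1 : ℝ) • (w₁ - w₂))
    rw [cnormSq_add_smul_aux C hH] at a
    simp only [hB] at hle
    linarith
  set M := ⨆ i, hC.1.eigenvalues i with hM
  set m := ⨅ i, hC.1.eigenvalues i with hm
  have hmpos : 0 < m := by
    obtain ⟨i, hi⟩ := exists_eq_ciInf_of_finite (f := hC.1.eigenvalues)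
    rw [hm, ← hi]
    exact hC.eigenvalues_pos i
  have lo : m * ‖w₁ - w₂‖ ^ 2 ≤ cnormSq C (w₁ - w₂) := by
    rw [hQ, normSq_eig_aux C hC.1, Finset.mul_sum]
    exact Finset.sum_le_sum fun i _ => mul_le_mul_of_nonneg_right
      (ciInf_le (Set.finite_range _).bddBelow i) (sq_nonneg _)
  have hi : cnormSq C (x₁ - x₂) ≤ M * ‖x₁ - x₂‖ ^ 2 := by
    rw [hQ, normSq_eig_aux C hC.1, Finset.mul_sum]
    exact Finset.sum_le_sum fun i _ => mul_le_mul_of_nonneg_right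
      (le_ciSup (Set.finite_range _).bddAbove i) (sq_nonneg _)
  have hfin : ‖w₁ - w₂‖ ^ 2 ≤ M / m * ‖x₁ - x₂‖ ^ 2 := by
    rw [div_mul_eq_mul_div, le_div_iff₀ hmpos]
    linarith
  calc ‖w₁ - w₂‖ ≤ Real.sqrt (M / m * ‖x₁ - x₂‖ ^ 2) := Real.le_sqrt_of_sq_le hfin
    _ = _ := by rw [Real.sqrt_mul' _ (sq_nonneg _), Real.sqrt_sq (norm_nonneg _)]
end

section
/- Let μ ∈ ℝ, σ > 0, α > 0, and n ≥ 1. Let U be uniform on [0,1] and Z standard normal, independent of each other. Define θ_init = μ − U/√n, X̄ = μ + σZ/√n, and the one-step gradient descent estimate θ̂ = θ_init − α σ⁻² (θ_init − X̄). Then P(θ̂ > μ) = P( Z > (σ/α − σ⁻¹)·U ); in particular this probability does not depend on n. Consequently, if σ/α − σ⁻¹ = M for a fixed large M, then P(θ̂ > μ) = 1 − Φ(M) + (1 − exp(−M²/2))/(M√(2π)), which can be made arbitrarily small independently of n, so the one-step gradient descent estimator is not asymptotically equivalent to the sample mean, for which P(X̄ > μ) = 1/2. -/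
open MeasureTheory ProbabilityTheory

lemma aux_cdf (x : ℝ) : (gaussianReal 0 1).real (Set.Iic x)
    = ∫ t in Set.Iic x, gaussianPDFReal 0 1 t := by
  rw [measureReal_def, gaussianReal_apply_eq_integral _ (by norm_num), ENNReal.toReal_ofReal]
  exact setIntegral_nonneg measurableSet_Iic fun t _ => gaussianPDFReal_nonneg _ _ _

lemma aux_cont : Continuous (gaussianPDFReal 0 1) := by
  unfold gaussianPDFReal; fun_prop

lemma aux_deriv (x : ℝ) :
    HasDerivAt (fun x => ∫ t in Set.Iic x, gaussianPDFReal 0 1 t) (gaussianPDFReal 0 1 x) x := by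
  have hi := integrable_gaussianPDFReal 0 1
  have h : (fun x => ∫ t in Set.Iic x, gaussianPDFReal 0 1 t)
      = fun x => (∫ t in Set.Iic 0, gaussianPDFReal 0 1 t)
        + ∫ t in (0:ℝ)..x, gaussianPDFReal 0 1 t := by
    funext y
    have := intervalIntegral.integral_Iic_sub_Iic (a := 0) (b := y) (μ := volume)
      hi.integrableOn hi.integrableOn
    linarith
  rw [h]
  exact (intervalIntegral.integral_hasDerivAt_right hi.intervalIntegrable
    (aux_cont.stronglyMeasurableAtFilter _ _) aux_cont.continuousAt).const_add _

lemma aux_int (M : ℝ) (hM : 0 < M) :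
    ∫ u in (0:ℝ)..1, (1 - ∫ t in Set.Iic (M * u), gaussianPDFReal 0 1 t)
     = 1 - (∫ t in Set.Iic M, gaussianPDFReal 0 1 t) +
          (1 - Real.exp (-M ^ 2 / 2)) / (M * Real.sqrt (2 * Real.pi)) := by
  have hs : 0 < Real.sqrt (2 * Real.pi) := by positivity
  have hF : Continuous (fun x => ∫ t in Set.Iic x, gaussianPDFReal 0 1 t) :=
    continuous_iff_continuousAt.2 fun x => (aux_deriv x).continuousAt
  rw [intervalIntegral.integral_eq_sub_of_hasDerivAt
    (f := fun u => u - (u * (∫ t in Set.Iic (M * u), gaussianPDFReal 0 1 t) +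
      Real.exp (-(M * u) ^ 2 / 2) / (M * Real.sqrt (2 * Real.pi))))]
  · simp; field_simp; ring
  · intro u _
    have h0 : HasDerivAt (fun u : ℝ => M * u) M u := by simpa using (hasDerivAt_id u).const_mul M
    have h1 := (aux_deriv (M * u)).comp u h0
    have h2 := (((h0.pow 2).neg.div_const 2).exp).div_const (M * Real.sqrt (2 * Real.pi))
    have h3 := (hasDerivAt_id u).sub (((hasDerivAt_id u).mul h1).add h2)
    refine HasDerivAt.congr_deriv h3 ?_
    have hp : gaussianPDFReal 0 1 (M * u)
        = Real.exp (-(M * u) ^ 2 / 2) / Real.sqrt (2 * Real.pi) := by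
      simp [gaussianPDFReal]; field_simp
    simp only [hp, Function.comp, id, Pi.neg_apply, Pi.pow_apply]
    field_simp
    push_cast
    ring
  · exact (continuous_const.sub (hF.comp (continuous_const.mul continuous_id))).intervalIntegrable _ _

lemma aux_half : (gaussianReal 0 1).real (Set.Ioi 0) = 1 / 2 := by
  have : NullSingletonClass (gaussianReal 0 1) := nullSingletonClass_gaussianReal (by norm_num)
  have h1 : (gaussianReal 0 1).real (Set.Ioi 0) = (gaussianReal 0 1).real (Set.Iic 0) := by
    have h := gaussianReal_map_neg (μ := 0) (v := 1)
    rw [neg_zero] at h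
    rw [measureReal_congr Iio_ae_eq_Iic.symm]
    conv_lhs => rw [← h]
    rw [map_measureReal_apply (by fun_prop) measurableSet_Ioi]
    congr 1
    ext x; simp
  have h2 := probReal_add_probReal_compl (μ := gaussianReal 0 1) (measurableSet_Iic (a := (0:ℝ)))
  rw [Set.compl_Iic] at h2
  linarith

/-- The gradient-descent one-step estimator counterexample: with
`θ_init = μ − U/√n`, `X̄ = μ + σZ/√n` and `θ̂ = θ_init − ασ⁻²(θ_init − X̄)`, one has
`P(θ̂ > μ) = P(Z > (σ/α − σ⁻¹)U)` (independent of `n`); if `σ/α − σ⁻¹ = M` then this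
probability equals `1 − Φ(M) + (1 − exp(−M²/2))/(M√(2π))`, while `P(X̄ > μ) = 1/2`
for the MLE `X̄`. Hence the one-step gradient descent estimator is not asymptotically
equivalent to the sample mean. -/
theorem gradient_descent_one_step_not_equivalent
    {Ω : Type*} [MeasurableSpace Ω] (P : Measure Ω) [IsProbabilityMeasure P]
    (Z U : Ω → ℝ) (hZm : Measurable Z) (hUm : Measurable U)
    (hZ : Measure.map Z P = gaussianReal 0 1)
    (hU : Measure.map U P = volume.restrict (Set.Icc (0 : ℝ) 1))
    (hindep : IndepFun Z U P)
    (μ σ α : ℝ) (hσ : 0 < σ) (hα : 0 < α)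
    (n : ℕ) (hn : 1 ≤ n)
    (θinit Xbar θhat : Ω → ℝ)
    (hθinit : ∀ ω, θinit ω = μ - U ω / Real.sqrt n)
    (hXbar : ∀ ω, Xbar ω = μ + σ * Z ω / Real.sqrt n)
    (hθhat : ∀ ω, θhat ω = θinit ω - α * σ⁻¹ ^ 2 * (θinit ω - Xbar ω)) :
    P {ω | μ < θhat ω} = P {ω | (σ / α - σ⁻¹) * U ω < Z ω} ∧
    (∀ M : ℝ, 0 < M → σ / α - σ⁻¹ = M →
      (P {ω | μ < θhat ω}).toReal =
        1 - (∫ t in Set.Iic M, gaussianPDFReal 0 1 t) +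
          (1 - Real.exp (-M ^ 2 / 2)) / (M * Real.sqrt (2 * Real.pi))) ∧
    (P {ω | μ < Xbar ω}).toReal = 1 / 2 := by
  have hn' : 0 < Real.sqrt n := Real.sqrt_pos.2 (by exact_mod_cast hn)
  have key : {ω | μ < θhat ω} = {ω | (σ / α - σ⁻¹) * U ω < Z ω} := by
    ext ω
    simp only [Set.mem_setOf_eq]
    have e : θhat ω - μ = (α / (σ * Real.sqrt n)) * (Z ω - (σ / α - σ⁻¹) * U ω) := by
      rw [hθhat, hθinit, hXbar]
      field_simp
      ring
    rw [← sub_pos, e, mul_pos_iff_of_pos_left (by positivity), sub_pos]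
  refine ⟨by rw [key], ?_, ?_⟩
  · intro M hM hMe
    rw [key, hMe, ← aux_int M hM]
    have hj : P.map (fun ω => (Z ω, U ω))
        = (gaussianReal 0 1).prod (volume.restrict (Set.Icc (0 : ℝ) 1)) := by
      rw [(indepFun_iff_map_prod_eq_prod_map_map hZm.aemeasurable hUm.aemeasurable).1 hindep,
        hZ, hU]
    have hS : MeasurableSet {p : ℝ × ℝ | M * p.2 < p.1} :=
      measurableSet_lt (by fun_prop) (by fun_prop)
    have e1 : P {ω | M * U ω < Z ω}
        = ∫⁻ u in Set.Icc (0:ℝ) 1, gaussianReal 0 1 (Set.Ioi (M * u)) := by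
      have : P {ω | M * U ω < Z ω}
          = P.map (fun ω => (Z ω, U ω)) {p : ℝ × ℝ | M * p.2 < p.1} := by
        rw [Measure.map_apply (by fun_prop) hS]; rfl
      rw [this, hj, Measure.prod_apply_symm hS]
      rfl
    have hmeas : Measurable fun u : ℝ => gaussianReal 0 1 (Set.Ioi (M * u)) :=
      measurable_measure_prodMk_right hS
    rw [e1, ← integral_toReal hmeas.aemeasurable
      (Filter.Eventually.of_forall fun u => measure_lt_top _ _),
      intervalIntegral.integral_of_le zero_le_one, integral_Icc_eq_integral_Ioc]
    congr 1
    funext u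
    have h2 := probReal_add_probReal_compl (μ := gaussianReal 0 1)
      (measurableSet_Iic (a := M * u))
    rw [Set.compl_Iic, aux_cdf] at h2
    rw [← measureReal_def]
    linarith
  · have : {ω | μ < Xbar ω} = Z ⁻¹' Set.Ioi 0 := by
      ext ω
      simp only [Set.mem_setOf_eq, Set.mem_preimage, Set.mem_Ioi]
      have e : Xbar ω - μ = (σ / Real.sqrt n) * Z ω := by
        rw [hXbar]; ring
      rw [← sub_pos, e, mul_pos_iff_of_pos_left (by positivity)]
    rw [this, ← Measure.map_apply hZm measurableSet_Ioi, hZ]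
    exact aux_half
end

section
/- Let X_1, ..., X_n be iid with density p_{θ*}, and let g_n(θ) = −(1/n) Σ_{i=1}^n log p_θ(X_i). Fix θ₀ ∈ Θ ⊆ ℝ^d and assume θ ↦ log p_θ(x) is three times differentiable for every x and the third-order partial derivatives of log p_θ(x) are dominated by a fixed integrable function C(x) for every θ in a neighborhood of θ₀. Then for every constant B > 0, the uniform quadratic remainder bound holds: sup over θ with √n‖θ − θ₀‖ < B of ‖√n(∇g_n(θ) − ∇g_n(θ₀)) − √n ∇²g_n(θ₀)(θ − θ₀)‖ converges to 0 in probability as n → ∞. -/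
open MeasureTheory Filter Topology ProbabilityTheory

open MeasureTheory Filter Topology ProbabilityTheory in
/-- The uniform quadratic-remainder bound from the proof of Proposition 2.3: for an iid sample
with a log-density that is three times differentiable with dominated third-order remainder near
`θ₀`, the normalized gradient of the negative log-likelihood `gₙ` satisfies
`sup_{√n‖θ−θ₀‖<B} √n‖(∇gₙ(θ) − ∇gₙ(θ₀)) − ∇²gₙ(θ₀)(θ−θ₀)‖ → 0` in probability. -/
theorem uniform_quadratic_remainder_loglikelihood
    (d : ℕ) (hd : 1 ≤ d)
    {𝒳 : Type*} [MeasurableSpace 𝒳] (μ : MeasureTheory.Measure 𝒳) [SigmaFinite μ]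
    (Θ : Set (EuclideanSpace ℝ (Fin d))) (hΘ : IsOpen Θ)
    (θstar θ0 : EuclideanSpace ℝ (Fin d)) (hθstar : θstar ∈ Θ) (hθ0 : θ0 ∈ Θ)
    -- the parametric family of densities
    (p : EuclideanSpace ℝ (Fin d) → 𝒳 → ℝ)
    (hpos : ∀ x, 0 < p θstar x)
    (hdens : ∫⁻ x, ENNReal.ofReal (p θstar x) ∂μ = 1)
    -- ν is the distribution of each observation
    (ν : MeasureTheory.Measure 𝒳)
    (hν : ν = μ.withDensity fun x => ENNReal.ofReal (p θstar x))
    -- the iid sample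
    {Ω : Type*} [MeasurableSpace Ω] (P : MeasureTheory.Measure Ω) [IsProbabilityMeasure P]
    (X : ℕ → Ω → 𝒳) (hXm : ∀ i, Measurable (X i))
    (hiid : iIndepFun X P)
    (hdist : ∀ i, MeasureTheory.Measure.map (X i) P = ν)
    -- θ ↦ log p_θ(x) is three times differentiable, with gradient dℓ and Hessian d2ℓ
    (dℓ : EuclideanSpace ℝ (Fin d) → 𝒳 → EuclideanSpace ℝ (Fin d))
    (d2ℓ : EuclideanSpace ℝ (Fin d) → 𝒳 → Matrix (Fin d) (Fin d) ℝ)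
    (hsmooth : ∀ x, ContDiff ℝ 3 fun θ => Real.log (p θ x))
    (hgrad : ∀ x θ, HasGradientAt (fun θ => Real.log (p θ x)) (dℓ θ x) θ)
    (hhess : ∀ x θ i, HasGradientAt (fun θ => dℓ θ x i) (toEuc fun j => d2ℓ θ x i j) θ)
    -- domination of the third-order remainder near θ₀ by an integrable function
    (Cf : 𝒳 → ℝ) (hCint : MeasureTheory.Integrable Cf ν)
    (hdom : ∃ δ : ℝ, 0 < δ ∧ ∀ θ : EuclideanSpace ℝ (Fin d), ‖θ - θ0‖ < δ → ∀ x,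
      ‖dℓ θ x - dℓ θ0 x - mApp (d2ℓ θ0 x) (θ - θ0)‖ ≤ Cf x * ‖θ - θ0‖ ^ 2) :
    -- conclusion: the uniform quadratic remainder bound
    ∀ B : ℝ, 0 < B → ∀ ε : ℝ, 0 < ε →
      Tendsto (fun n : ℕ => P {ω | ∃ θ : EuclideanSpace ℝ (Fin d),
          Real.sqrt n * ‖θ - θ0‖ < B ∧
          ε ≤ Real.sqrt n *
            ‖((-(n : ℝ)⁻¹) • ∑ i ∈ Finset.range n, dℓ θ (X i ω) -
                (-(n : ℝ)⁻¹) • ∑ i ∈ Finset.range n, dℓ θ0 (X i ω)) -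
              mApp ((-(n : ℝ)⁻¹) • ∑ i ∈ Finset.range n, d2ℓ θ0 (X i ω)) (θ - θ0)‖})
        atTop (𝓝 0) := by
  intro B hB ε hε
  obtain ⟨δ, hδ, hdom⟩ := hdom
  set K : ℝ := ∫ x, ‖Cf x‖ ∂ν with hK
  have hint : ∀ i, Integrable (fun ω => ‖Cf (X i ω)‖) P := by
    intro i
    have h := hCint.norm
    rw [← hdist i] at h
    exact h.comp_measurable (hXm i)
  have hintK : ∀ i, ∫ ω, ‖Cf (X i ω)‖ ∂P = K := by
    intro i
    have h := hCint.norm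
    rw [← hdist i] at h
    rw [hK, ← hdist i]
    exact (integral_map (hXm i).aemeasurable h.aestronglyMeasurable).symm
  have hsq : Tendsto (fun n : ℕ => Real.sqrt n) atTop atTop :=
    Real.tendsto_sqrt_atTop.comp tendsto_natCast_atTop_atTop
  have hlim : Tendsto (fun n : ℕ => ENNReal.ofReal ((K * B ^ 2 / ε) / Real.sqrt n)) atTop (𝓝 0) := by
    have h := ENNReal.tendsto_ofReal (hsq.const_div_atTop (K * B ^ 2 / ε))
    simpa using h
  refine tendsto_of_tendsto_of_tendsto_of_le_of_le' tendsto_const_nhds hlim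
    (Eventually.of_forall fun _ => zero_le) ?_
  filter_upwards [eventually_gt_atTop 0, hsq.eventually_gt_atTop (B / δ)] with n hn hnδ
  have hn' : (0 : ℝ) < n := by exact_mod_cast hn
  have hs : 0 < Real.sqrt n := Real.sqrt_pos.mpr hn'
  have hss : Real.sqrt n * Real.sqrt n = n := Real.mul_self_sqrt hn'.le
  set s := Real.sqrt n with hsdef
  set S : Ω → ℝ := fun ω => ∑ i ∈ Finset.range n, ‖Cf (X i ω)‖ with hS
  have hSint : Integrable S P := integrable_finsetSum _ fun i _ => hint i
  have hSK : ∫ ω, S ω ∂P = n * K := by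
    rw [hS, integral_finsetSum _ fun i _ => hint i]
    rw [Finset.sum_congr rfl fun i _ => hintK i]
    simp
  have hS0 : ∀ ω, 0 ≤ S ω := fun ω => Finset.sum_nonneg fun i _ => norm_nonneg _
  set t : ℝ := ε * n * s / B ^ 2 with ht
  have htpos : 0 < t := by positivity
  have hmarkov := mul_meas_ge_le_integral_of_nonneg (μ := P) (Eventually.of_forall hS0) hSint t
  rw [hSK] at hmarkov
  have hreal : P.real {ω | t ≤ S ω} ≤ (K * B ^ 2 / ε) / s := by
    have h1 : P.real {ω | t ≤ S ω} ≤ n * K / t := by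
      rw [le_div_iff₀ htpos, mul_comm]; exact hmarkov
    refine h1.trans (le_of_eq ?_)
    rw [ht]; field_simp
  have hsub : {ω | ∃ θ : EuclideanSpace ℝ (Fin d),
          s * ‖θ - θ0‖ < B ∧
          ε ≤ s *
            ‖((-(n : ℝ)⁻¹) • ∑ i ∈ Finset.range n, dℓ θ (X i ω) -
                (-(n : ℝ)⁻¹) • ∑ i ∈ Finset.range n, dℓ θ0 (X i ω)) -
              mApp ((-(n : ℝ)⁻¹) • ∑ i ∈ Finset.range n, d2ℓ θ0 (X i ω)) (θ - θ0)‖}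
        ⊆ {ω | t ≤ S ω} := by
    rintro ω ⟨θ, hθ, hle⟩
    have hθδ : ‖θ - θ0‖ < δ := by
      rw [div_lt_iff₀ hδ] at hnδ
      exact lt_of_mul_lt_mul_left (hθ.trans hnδ) hs.le
    have heq : ((-(n : ℝ)⁻¹) • ∑ i ∈ Finset.range n, dℓ θ (X i ω) -
                (-(n : ℝ)⁻¹) • ∑ i ∈ Finset.range n, dℓ θ0 (X i ω)) -
              mApp ((-(n : ℝ)⁻¹) • ∑ i ∈ Finset.range n, d2ℓ θ0 (X i ω)) (θ - θ0)
        = (-(n : ℝ)⁻¹) • ∑ i ∈ Finset.range n,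
          (dℓ θ (X i ω) - dℓ θ0 (X i ω) - mApp (d2ℓ θ0 (X i ω)) (θ - θ0)) := by
      simp only [mApp, map_smul, map_sum, LinearMap.smul_apply, LinearMap.sum_apply,
        Finset.sum_sub_distrib, smul_sub]
    have hb : ‖∑ i ∈ Finset.range n,
          (dℓ θ (X i ω) - dℓ θ0 (X i ω) - mApp (d2ℓ θ0 (X i ω)) (θ - θ0))‖
        ≤ S ω * ‖θ - θ0‖ ^ 2 := by
      rw [hS, Finset.sum_mul]
      refine norm_sum_le_of_le _ fun i _ => (hdom θ hθδ _).trans ?_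
      gcongr
      exact Real.le_norm_self _
    rw [heq, norm_smul, norm_neg, norm_inv, Real.norm_of_nonneg hn'.le] at hle
    have hsq2 : (s * ‖θ - θ0‖) ^ 2 ≤ B ^ 2 := by gcongr
    have h3 : ε ≤ s * ((n : ℝ)⁻¹ * (S ω * ‖θ - θ0‖ ^ 2)) :=
      hle.trans (by gcongr)
    have h4 : ε * n * s ≤ S ω * (s * ‖θ - θ0‖) ^ 2 := by
      calc ε * n * s ≤ s * ((n : ℝ)⁻¹ * (S ω * ‖θ - θ0‖ ^ 2)) * n * s := by gcongr
        _ = _ := by field_simp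
    show t ≤ S ω
    rw [ht, div_le_iff₀ (by positivity)]
    exact h4.trans (mul_le_mul_of_nonneg_left hsq2 (hS0 ω))
  refine (measure_mono hsub).trans ?_
  rw [← ENNReal.ofReal_toReal (measure_ne_top P {ω | t ≤ S ω})]
  exact ENNReal.ofReal_le_ofReal hreal
end
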